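/- For every universal oracle machine U, the infinitude probability μ(INF(U)) is a 2-random 0'-right-c.e. real. Conversely, every 2-random 0'-right-c.e. real α ∈ (0,1) equals μ(INF(U)) for some universal oracle machine U. -/

import Mathlib

open scoped Classical
open MeasureTheory

namespace RandProb

/-- Cantor space: the space of infinite binary sequences. -/
abbrev Cantor := ℕ → Bool

/-! ### Oracle partial recursive functions, via codes -/

/-- Codes for partial recursive functions with access to an oracle `O : ℕ → ℕ`.
These codes play the role of (oracle) Turing machines. -/
inductive CodeO : Type
  | zero : CodeO
  | succ : CodeO
  | left : CodeO
  | right : CodeO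
  | oracle : CodeO
  | pair : CodeO → CodeO → CodeO
  | comp : CodeO → CodeO → CodeO
  | prec : CodeO → CodeO → CodeO
  | rfind' : CodeO → CodeO

/-- Evaluation of an oracle code with (total) oracle `O`. -/
def CodeO.eval (O : ℕ → ℕ) : CodeO → ℕ →. ℕ
  | .zero => pure 0
  | .succ => Nat.succ
  | .left => ↑fun n : ℕ => n.unpair.1
  | .right => ↑fun n : ℕ => n.unpair.2
  | .oracle => ↑fun n : ℕ => O n
  | .pair cf cg => fun n => Nat.pair <$> cf.eval O n <*> cg.eval O n
  | .comp cf cg => fun n => cg.eval O n >>= cf.eval O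
  | .prec cf cg =>
    Nat.unpaired fun a n =>
      n.rec (cf.eval O a) fun y IH => do
        let i ← IH
        cg.eval O (Nat.pair a (Nat.pair y i))
  | .rfind' cf =>
    Nat.unpaired fun a m =>
      (Nat.rfind fun n => (fun m => m = 0) <$> cf.eval O (Nat.pair a (n + m))).map (· + m)

/-- A canonical injective numbering of oracle codes. -/
def CodeO.encode : CodeO → ℕ
  | .zero => 0
  | .succ => 1
  | .left => 2
  | .right => 3
  | .oracle => 4
  | .pair cf cg => 2 * (2 * Nat.pair cf.encode cg.encode) + 5
  | .comp cf cg => 2 * (2 * Nat.pair cf.encode cg.encode + 1) + 5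
  | .prec cf cg => 2 * (2 * Nat.pair cf.encode cg.encode) + 6
  | .rfind' cf => 2 * (2 * cf.encode + 1) + 6

/-- The Turing jump of an oracle: the halting problem relative to `O`,
as a `{0,1}`-valued function. -/
noncomputable def jump (O : ℕ → ℕ) : ℕ → ℕ := fun e =>
  if ∃ c : CodeO, c.encode = e ∧ (c.eval O e).Dom then 1 else 0

/-- `iterJump n` is `∅^(n)`, the `n`-th iterate of the halting problem (as an oracle). -/
noncomputable def iterJump : ℕ → ℕ → ℕ
  | 0 => fun _ => 0
  | n + 1 => jump (iterJump n)

/-- `S ⊆ ℕ` is computably enumerable relative to the oracle `O`. -/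
def CeIn (O : ℕ → ℕ) (S : Set ℕ) : Prop := ∃ c : CodeO, S = {m | (c.eval O m).Dom}

/-- The left Dedekind cut of `α` (as a set of codes of rationals) is c.e. in `O`. -/
def LeftCeIn (O : ℕ → ℕ) (α : ℝ) : Prop :=
  CeIn O {m | ∃ q : ℚ, Encodable.encode q = m ∧ (q : ℝ) < α}

/-- The right Dedekind cut of `α` (as a set of codes of rationals) is c.e. in `O`. -/
def RightCeIn (O : ℕ → ℕ) (α : ℝ) : Prop :=
  CeIn O {m | ∃ q : ℚ, Encodable.encode q = m ∧ α < (q : ℝ)}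

/-! ### Martin-Löf randomness for real numbers -/

/-- The `i`-th component of a Martin-Löf test coded by the set `W ⊆ ℕ`:
the union of all open rational intervals whose codes are enumerated into the
`i`-th section of `W`. -/
def testSet (W : Set ℕ) (i : ℕ) : Set ℝ :=
  {x | ∃ p q : ℚ, Nat.pair i (Encodable.encode (p, q)) ∈ W ∧ (p : ℝ) < x ∧ x < (q : ℝ)}

/-- `α` is Martin-Löf random relative to the oracle `O`. -/
def MLRandomIn (O : ℕ → ℕ) (α : ℝ) : Prop :=
  ∀ W : Set ℕ, CeIn O W →
    (∀ i, volume (testSet W i) ≤ ENNReal.ofReal ((2 : ℝ)⁻¹ ^ i)) →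
    ∃ i, α ∉ testSet W i

/-- `α` is `n`-random: Martin-Löf random relative to `∅^(n-1)`. -/
def NRandom (n : ℕ) (α : ℝ) : Prop := MLRandomIn (iterJump (n - 1)) α

/-! ### The uniform measure on Cantor space -/

/-- The binary digits of a real number (meaningful on `[0,1)`). -/
noncomputable def digits (x : ℝ) : Cantor := fun n => decide (⌊x * 2 ^ (n + 1)⌋ % 2 = 1)

/-- The uniform (Lebesgue) product measure on Cantor space, obtained as the
pushforward of Lebesgue measure on `[0,1)` under the binary-digit map. -/
noncomputable def mu : Measure Cantor :=
  Measure.map digits (volume.restrict (Set.Ico (0 : ℝ) 1))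

/-- The uniform measure of a set of elements of Cantor space, as a real number. -/
noncomputable def muR (S : Set Cantor) : ℝ := (mu S).toReal

/-! ### Strings, prefixes and cylinders -/

/-- The length-`n` initial segment of `X ∈ 2^ω`, as a finite binary string. -/
def initSeg (X : Cantor) (n : ℕ) : List Bool := (List.range n).map X

/-- `⟦S⟧`: the elements of Cantor space having a prefix in the set of strings `S`. -/
def cyl (S : Set (List Bool)) : Set Cantor := {X | ∃ n, initSeg X n ∈ S}

/-- A set of strings is prefix-free if none of its elements properly extends another. -/
def IsPrefixFree (S : Set (List Bool)) : Prop := ∀ σ ∈ S, ∀ τ ∈ S, σ <+: τ → σ = τ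

/-- A set of strings is upward closed if it is closed under taking extensions. -/
def UpClosed (S : Set (List Bool)) : Prop := ∀ σ ∈ S, ∀ τ, σ <+: τ → τ ∈ S

/-- Two strings are compatible if one is a prefix of the other. -/
def Compatible (σ τ : List Bool) : Prop := σ <+: τ ∨ τ <+: σ

/-! ### Oracle machines -/

/-- An element of Cantor space viewed as a `{0,1}`-valued oracle. -/
def oX (X : Cantor) : ℕ → ℕ := fun n => cond (X n) 1 0

/-- `evalO X c n`: the (possibly divergent) output of the oracle machine `c`
on input `n` with oracle `X`. -/
def evalO (X : Cantor) (c : CodeO) (n : ℕ) : Part ℕ := c.eval (oX X) n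

/-- The oracle obtained by writing the string `ρ` before the bits of `X`. -/
def prepend (ρ : List Bool) (X : Cantor) : Cantor := fun n =>
  if n < ρ.length then ρ.getD n false else X (n - ρ.length)

/-- `X ∈ 2^ω` extends the finite string `ρ`. -/
def Extends (X : Cantor) (ρ : List Bool) : Prop := initSeg X ρ.length = ρ

/-- `u` is a universal oracle machine: some effective, prefix-free translation
`c ↦ σ_c` satisfies `u(σ_c * X, n) ≃ c(X, n)` for all machines `c`. -/
def UniversalOM (u : CodeO) : Prop :=
  ∃ σ : CodeO → List Bool,
    (∃ f : ℕ → ℕ, Computable f ∧ ∀ c : CodeO, f c.encode = Encodable.encode (σ c)) ∧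
    IsPrefixFree (Set.range σ) ∧
    ∀ (c : CodeO) (X : Cantor) (n : ℕ), evalO (prepend (σ c) X) u n = evalO X c n

/-- `TOT(c)`: the oracles `X` such that the function `c(X)` is total. -/
def TOT (c : CodeO) : Set Cantor := {X | ∀ n, (evalO X c n).Dom}

/-- The domain of the partial function `c(X)`. -/
def domSet (c : CodeO) (X : Cantor) : Set ℕ := {n | (evalO X c n).Dom}

/-- The range of the partial function `c(X)`. -/
def ranSet (c : CodeO) (X : Cantor) : Set ℕ := {v | ∃ n, v ∈ evalO X c n}

/-- `INF(c)`: the oracles `X` such that `c(X)` has infinite domain. -/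
def INF (c : CodeO) : Set Cantor := {X | (domSet c X).Infinite}

/-- `COF(c)`: the oracles `X` such that `c(X)` has cofinite domain. -/
def COF (c : CodeO) : Set Cantor := {X | (domSet c X)ᶜ.Finite}

/-- `COM(c)`: the oracles `X` such that `c(X)` has computable domain. -/
def COM (c : CodeO) : Set Cantor := {X | ComputablePred fun n => n ∈ domSet c X}

/-- The characteristic function of a set of naturals. -/
noncomputable def chi (A : Set ℕ) : ℕ → ℕ := fun n => if n ∈ A then 1 else 0

/-- Turing reducibility between sets of naturals. -/
def TuringLEs (B A : Set ℕ) : Prop := ∃ c : CodeO, ∀ n, c.eval (chi A) n = Part.some (chi B n)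

/-- The halting problem `∅'` as a set of naturals. -/
noncomputable def HaltingSet : Set ℕ := {e | iterJump 1 e = 1}

/-- `COMPL(c)`: the oracles `X` such that the domain of `c(X)` computes the halting problem. -/
noncomputable def COMPL (c : CodeO) : Set Cantor := {X | TuringLEs HaltingSet (domSet c X)}

/-- Turing reducibility between total functions on ℕ. -/
def TuringLEf (f g : ℕ → ℕ) : Prop := ∃ c : CodeO, ∀ n, c.eval g n = Part.some (f n)

/-- A real number viewed as an oracle, via its binary expansion. -/
noncomputable def realOracle (α : ℝ) : ℕ → ℕ := oX (digits α)

/-- Two reals have Turing-incomparable degrees. -/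
noncomputable def TIncompReal (α β : ℝ) : Prop :=
  ¬ TuringLEf (realOracle α) (realOracle β) ∧ ¬ TuringLEf (realOracle β) (realOracle α)

/-! ### Arithmetical hierarchy -/

/-- Evaluation with the trivial (empty) oracle: ordinary partial recursion. -/
def eval0 (c : CodeO) : ℕ →. ℕ := c.eval fun _ => 0

/-- `SigmaNumIdx n c` is the `Σ^0_{n+1}` subset of `ℕ` with index `c`. -/
def SigmaNumIdx : ℕ → CodeO → Set ℕ
  | 0, c => {m | (eval0 c m).Dom}
  | n + 1, c => {m | ∃ k, Nat.pair m k ∉ SigmaNumIdx n c}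

/-- `S ⊆ ℕ` is `Σ^0_n` (intended for `n ≥ 1`). -/
def SigmaN (n : ℕ) (S : Set ℕ) : Prop := ∃ c : CodeO, S = SigmaNumIdx (n - 1) c

/-- The set of codes of the elements of a set of binary strings. -/
def strCodes (S : Set (List Bool)) : Set ℕ := {m | ∃ σ ∈ S, Encodable.encode σ = m}

/-- A set of binary strings is `Σ^0_n`. -/
def SigmaStr (n : ℕ) (S : Set (List Bool)) : Prop := SigmaN n (strCodes S)

/-- A set of binary strings is `Π^0_n`: its complement is `Σ^0_n`. -/
def PiStr (n : ℕ) (S : Set (List Bool)) : Prop := SigmaStr n Sᶜ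

/-- A set of binary strings is c.e. relative to the oracle `O`. -/
def CeStrIn (O : ℕ → ℕ) (S : Set (List Bool)) : Prop := CeIn O (strCodes S)

/-- `SigmaClassIdx n c m` is the `Σ^0_{n+1}` class of elements of Cantor space
with index `c` and parameter `m`. -/
def SigmaClassIdx : ℕ → CodeO → ℕ → Set Cantor
  | 0, c, m => {X | (evalO X c m).Dom}
  | n + 1, c, m => {X | ∃ k, X ∉ SigmaClassIdx n c (Nat.pair m k)}

/-! ### Monotone machines -/

/-- A monotone machine: a partial computable, monotone map on finite binary strings. -/
structure MonoMachine where
  f : List Bool →. List Bool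
  partrec : Partrec f
  mono : ∀ ⦃σ τ a b : List Bool⦄, σ <+: τ → a ∈ f σ → b ∈ f τ → a <+: b

/-- The oracles `X` such that the output of the monotone machine on `X` is infinite. -/
def MonoINF (M : MonoMachine) : Set Cantor :=
  {X | ∀ k, ∃ n a, a ∈ M.f (initSeg X n) ∧ k ≤ a.length}

/-- The `k`-th bit of the output `M(X)` of a monotone machine is `b`. -/
def MonoMachine.hasBit (M : MonoMachine) (X : Cantor) (k : ℕ) (b : Bool) : Prop :=
  ∃ n a, a ∈ M.f (initSeg X n) ∧ a[k]? = some b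

/-- `U` is a universal monotone machine. -/
def UniversalMono (U : MonoMachine) : Prop :=
  ∃ (M : ℕ → MonoMachine) (σ : ℕ → List Bool),
    Partrec₂ (fun (e : ℕ) (τ : List Bool) => (M e).f τ) ∧
    (∀ V : MonoMachine, ∃ e, (M e).f = V.f) ∧
    Computable σ ∧ IsPrefixFree (Set.range σ) ∧
    ∀ e τ, U.f (σ e ++ τ) = (M e).f τ

/-! ### Infinitary self-delimiting machines -/

/-- Chaitin's infinitary self-delimiting machines: `f σ n` is the `n`-th approximation
of the output on program `σ` (`none` meaning divergence); the convergence relation is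
decidable, approximations are monotone, and machines are self-delimiting. -/
structure InfMachine where
  f : List Bool → ℕ → Option (List Bool)
  computable : Computable₂ f
  mono : ∀ σ m n a, n < m → f σ m = some a → ∃ b, f σ n = some b ∧ b <+: a
  sd : ∀ σ τ n a, f σ n = some a → f (σ ++ τ) n = some a

/-- `M^∞(σ)↓`: all approximations converge. -/
def InfMachine.domInf (M : InfMachine) (σ : List Bool) : Prop := ∀ n, M.f σ n ≠ none

/-- The domain of `M^∞`. -/
def InfMachine.DOM (M : InfMachine) : Set (List Bool) := {σ | M.domInf σ}

/-- The output `M^∞(σ)` is infinite (a stream). -/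
def InfMachine.outInf (M : InfMachine) (σ : List Bool) : Prop :=
  ∀ k, ∃ n a, M.f σ n = some a ∧ k ≤ a.length

/-- `FIN(M^∞)`: programs in the domain with finite output. -/
def InfMachine.FIN (M : InfMachine) : Set (List Bool) := {σ | M.domInf σ ∧ ¬ M.outInf σ}

/-- `INF(M^∞)`: programs in the domain with infinite output. -/
def InfMachine.INF (M : InfMachine) : Set (List Bool) := {σ | M.domInf σ ∧ M.outInf σ}

/-- The `k`-th bit of the output `M^∞(σ)` is `b`. -/
def InfMachine.hasBit (M : InfMachine) (σ : List Bool) (k : ℕ) (b : Bool) : Prop :=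
  ∃ n a, M.f σ n = some a ∧ a[k]? = some b

/-- The domain of the prefix-free machine `M^*`: minimal strings in the domain of `M^∞`. -/
def InfMachine.DOMstar (M : InfMachine) : Set (List Bool) :=
  {σ | M.domInf σ ∧ ∀ τ, τ <+: σ → τ ≠ σ → ¬ M.domInf τ}

/-- Programs whose output is a stream with a tail of 1s. -/
def InfMachine.COFout (M : InfMachine) : Set (List Bool) :=
  {σ | M.domInf σ ∧ M.outInf σ ∧ ∃ t, ∀ k, t ≤ k → M.hasBit σ k true}

/-- `A^∞(σ) ≃ B^∞(τ)`: both converge or both diverge, with equal outputs. -/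
def InfAgree (A : InfMachine) (σ : List Bool) (B : InfMachine) (τ : List Bool) : Prop :=
  (A.domInf σ ↔ B.domInf τ) ∧ (A.domInf σ → ∀ k b, (A.hasBit σ k b ↔ B.hasBit τ k b))

/-- `U` is a universal infinitary self-delimiting machine. -/
def UniversalInf (U : InfMachine) : Prop :=
  ∃ (M : ℕ → InfMachine) (σ : ℕ → List Bool),
    Computable (fun p : ℕ × List Bool × ℕ => (M p.1).f p.2.1 p.2.2) ∧
    (∀ V : InfMachine, ∃ e, ∀ τ, InfAgree (M e) τ V τ) ∧
    Computable σ ∧ IsPrefixFree (Set.range σ) ∧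
    ∀ e τ, InfAgree U (σ e ++ τ) (M e) τ

end RandProb



open scoped Classical
open MeasureTheory

attribute [fun_prop] Computable

namespace RandProb

/-! ### A small toolkit for computable functions -/

section Toolkit

variable {α β γ δ : Type*} [Primcodable α] [Primcodable β] [Primcodable γ] [Primcodable δ]

@[fun_prop] theorem cmp_id : Computable (fun x : α => x) := Computable.id
@[fun_prop] theorem cmp_const (b : β) : Computable (fun _ : α => b) := Computable.const b
@[fun_prop] theorem cmp_comp {f : β → γ} {g : α → β} (hf : Computable f) (hg : Computable g) :
    Computable (fun x => f (g x)) := hf.comp hg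
@[fun_prop] theorem cmp_pair {f : α → β} {g : α → γ} (hf : Computable f) (hg : Computable g) :
    Computable (fun x => (f x, g x)) := hf.pair hg
@[fun_prop] theorem cmp_fst {f : α → β × γ} (hf : Computable f) :
    Computable (fun x => (f x).1) := Computable.fst.comp hf
@[fun_prop] theorem cmp_snd {f : α → β × γ} (hf : Computable f) :
    Computable (fun x => (f x).2) := Computable.snd.comp hf
@[fun_prop] theorem cmp_add {f g : α → ℕ} (hf : Computable f) (hg : Computable g) :
    Computable (fun x => f x + g x) := (Primrec.nat_add.to_comp).comp hf hg
@[fun_prop] theorem cmp_mul {f g : α → ℕ} (hf : Computable f) (hg : Computable g) :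
    Computable (fun x => f x * g x) := (Primrec.nat_mul.to_comp).comp hf hg
@[fun_prop] theorem cmp_sub {f g : α → ℕ} (hf : Computable f) (hg : Computable g) :
    Computable (fun x => f x - g x) := (Primrec.nat_sub.to_comp).comp hf hg
@[fun_prop] theorem cmp_div {f g : α → ℕ} (hf : Computable f) (hg : Computable g) :
    Computable (fun x => f x / g x) := (Primrec.nat_div.to_comp).comp hf hg
@[fun_prop] theorem cmp_mod {f g : α → ℕ} (hf : Computable f) (hg : Computable g) :
    Computable (fun x => f x % g x) := (Primrec.nat_mod.to_comp).comp hf hg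
@[fun_prop] theorem cmp_pow {f g : α → ℕ} (hf : Computable f) (hg : Computable g) :
    Computable (fun x => f x ^ g x) :=
  ((Primrec₂.unpaired'.1 Nat.Primrec.pow).to_comp).comp hf hg
@[fun_prop] theorem cmp_natpair {f g : α → ℕ} (hf : Computable f) (hg : Computable g) :
    Computable (fun x => Nat.pair (f x) (g x)) := (Primrec₂.natPair.to_comp).comp hf hg
@[fun_prop] theorem cmp_unpair {f : α → ℕ} (hf : Computable f) :
    Computable (fun x => Nat.unpair (f x)) := (Primrec.unpair.to_comp).comp hf
@[fun_prop] theorem cmp_beq {f g : α → ℕ} (hf : Computable f) (hg : Computable g) :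
    Computable (fun x => decide (f x = g x)) := by
  have h : PrimrecRel (fun a b : ℕ => a = b) := Primrec.eq
  exact (h.decide.to_comp).comp hf hg
@[fun_prop] theorem cmp_lt {f g : α → ℕ} (hf : Computable f) (hg : Computable g) :
    Computable (fun x => decide (f x < g x)) := by
  have h : PrimrecRel (fun a b : ℕ => a < b) := Primrec.nat_lt
  exact (h.decide.to_comp).comp hf hg
@[fun_prop] theorem cmp_le {f g : α → ℕ} (hf : Computable f) (hg : Computable g) :
    Computable (fun x => decide (f x ≤ g x)) := by
  have h : PrimrecRel (fun a b : ℕ => a ≤ b) := Primrec.nat_le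
  exact (h.decide.to_comp).comp hf hg
/-- Boolean comparison of naturals -/
def nlt (a b : ℕ) : Bool := decide (a < b)
/-- Boolean comparison of naturals -/
def nle (a b : ℕ) : Bool := decide (a ≤ b)
/-- Boolean comparison of naturals -/
def neq (a b : ℕ) : Bool := decide (a = b)
@[simp] theorem nlt_iff (a b : ℕ) : nlt a b = true ↔ a < b := decide_eq_true_iff
@[simp] theorem nle_iff (a b : ℕ) : nle a b = true ↔ a ≤ b := decide_eq_true_iff
@[simp] theorem neq_iff (a b : ℕ) : neq a b = true ↔ a = b := decide_eq_true_iff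
@[fun_prop] theorem cmp_nlt {f g : α → ℕ} (hf : Computable f) (hg : Computable g) :
    Computable (fun x => nlt (f x) (g x)) := cmp_lt hf hg
@[fun_prop] theorem cmp_nle {f g : α → ℕ} (hf : Computable f) (hg : Computable g) :
    Computable (fun x => nle (f x) (g x)) := cmp_le hf hg
@[fun_prop] theorem cmp_neq {f g : α → ℕ} (hf : Computable f) (hg : Computable g) :
    Computable (fun x => neq (f x) (g x)) := cmp_beq hf hg
@[fun_prop] theorem cmp_cond {c : α → Bool} {f g : α → β} (hc : Computable c)
    (hf : Computable f) (hg : Computable g) :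
    Computable (fun x => bif c x then f x else g x) := Computable.cond hc hf hg
@[fun_prop] theorem cmp_and {f g : α → Bool} (hf : Computable f) (hg : Computable g) :
    Computable (fun x => f x && g x) := (Primrec.and.to_comp).comp hf hg
@[fun_prop] theorem cmp_or {f g : α → Bool} (hf : Computable f) (hg : Computable g) :
    Computable (fun x => f x || g x) := (Primrec.or.to_comp).comp hf hg
@[fun_prop] theorem cmp_not {f : α → Bool} (hf : Computable f) :
    Computable (fun x => !(f x)) := (Primrec.not.to_comp).comp hf
@[fun_prop] theorem cmp_some {f : α → β} (hf : Computable f) :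
    Computable (fun x => some (f x)) := Computable.option_some.comp hf
@[fun_prop] theorem cmp_isSome {f : α → Option β} (hf : Computable f) :
    Computable (fun x => (f x).isSome) := (Primrec.option_isSome.to_comp).comp hf
@[fun_prop] theorem cmp_getD {f : α → Option β} {g : α → β} (hf : Computable f)
    (hg : Computable g) :
    Computable (fun x => (f x).getD (g x)) := Computable.option_getD hf hg
@[fun_prop] theorem cmp_take {f : α → ℕ} {g : α → List β} (hf : Computable f)
    (hg : Computable g) :
    Computable (fun x => (g x).take (f x)) := (Primrec.list_take.to_comp).comp hf hg
@[fun_prop] theorem cmp_drop {f : α → ℕ} {g : α → List β} (hf : Computable f)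
    (hg : Computable g) :
    Computable (fun x => (g x).drop (f x)) := (Primrec.list_drop.to_comp).comp hf hg
@[fun_prop] theorem cmp_length {g : α → List β} (hg : Computable g) :
    Computable (fun x => (g x).length) := (Primrec.list_length.to_comp).comp hg
@[fun_prop] theorem cmp_getElem {f : α → ℕ} {g : α → List β} (hf : Computable f)
    (hg : Computable g) :
    Computable (fun x => (g x)[f x]?) := (Primrec.list_getElem?.to_comp).comp hg hf
@[fun_prop] theorem cmp_append {f g : α → List β} (hf : Computable f)
    (hg : Computable g) :
    Computable (fun x => f x ++ g x) := (Primrec.list_append.to_comp).comp hf hg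
@[fun_prop] theorem cmp_cons {f : α → β} {g : α → List β} (hf : Computable f)
    (hg : Computable g) :
    Computable (fun x => f x :: g x) := (Primrec.list_cons.to_comp).comp hf hg
@[fun_prop] theorem cmp_encode {f : α → β} (hf : Computable f) :
    Computable (fun x => Encodable.encode (f x)) := Computable.encode.comp hf
@[fun_prop] theorem cmp_decode {f : α → ℕ} (hf : Computable f) :
    Computable (fun x => (Encodable.decode (f x) : Option β)) := Computable.decode.comp hf

theorem cmp_natrec {f : α → ℕ} {g : α → β} {h : α → ℕ → β → β} (hf : Computable f)
    (hg : Computable g) (hh : Computable (fun x : α × ℕ × β => h x.1 x.2.1 x.2.2)) :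
    Computable (fun x => (Nat.rec (g x) (h x) (f x) : β)) := by
  have := Computable.nat_rec (h := fun a p => h a p.1 p.2) hf hg hh
  exact this

/-- bounded universal quantification -/
def ball : ℕ → (ℕ → Bool) → Bool
  | 0, _ => true
  | n + 1, p => ball n p && p n

/-- bounded existential quantification -/
def bex : ℕ → (ℕ → Bool) → Bool
  | 0, _ => false
  | n + 1, p => bex n p || p n

/-- bounded counting -/
def bcount : ℕ → (ℕ → Bool) → ℕ
  | 0, _ => 0
  | n + 1, p => bcount n p + bif p n then 1 else 0

@[simp] theorem ball_iff (n : ℕ) (p : ℕ → Bool) : ball n p = true ↔ ∀ i < n, p i = true := by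
  induction n with
  | zero => simp [ball]
  | succ n ih =>
    simp only [ball, Bool.and_eq_true, ih, Nat.lt_succ_iff_lt_or_eq]
    exact ⟨fun h i hi => hi.elim (h.1 i) (fun e => e ▸ h.2), fun h =>
      ⟨fun i hi => h i (Or.inl hi), h n (Or.inr rfl)⟩⟩

@[simp] theorem bex_iff (n : ℕ) (p : ℕ → Bool) : bex n p = true ↔ ∃ i < n, p i = true := by
  induction n with
  | zero => simp [bex]
  | succ n ih =>
    simp only [bex, Bool.or_eq_true, ih, Nat.lt_succ_iff_lt_or_eq]
    constructor
    · rintro (⟨i, hi, h⟩ | h)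
      · exact ⟨i, Or.inl hi, h⟩
      · exact ⟨n, Or.inr rfl, h⟩
    · rintro ⟨i, hi | rfl, h⟩
      · exact Or.inl ⟨i, hi, h⟩
      · exact Or.inr h

theorem bcount_eq (n : ℕ) (p : ℕ → Bool) :
    bcount n p = ((Finset.range n).filter (fun i => p i = true)).card := by
  induction n with
  | zero => simp [bcount]
  | succ n ih =>
    rw [bcount, ih, Finset.range_add_one, Finset.filter_insert]
    cases h : p n <;> simp

@[fun_prop] theorem cmp_ball {f : α → ℕ} {p : α → ℕ → Bool} (hf : Computable f)
    (hp : Computable (fun x : α × ℕ => p x.1 x.2)) : Computable (fun x => ball (f x) (p x)) := by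
  have := cmp_natrec (g := fun _ : α => true) (h := fun a n b => b && p a n) hf (by fun_prop)
    (by fun_prop)
  refine this.of_eq fun x => ?_
  generalize f x = n
  induction n with
  | zero => rfl
  | succ n ih => simp only [ball, ← ih]

@[fun_prop] theorem cmp_bex {f : α → ℕ} {p : α → ℕ → Bool} (hf : Computable f)
    (hp : Computable (fun x : α × ℕ => p x.1 x.2)) : Computable (fun x => bex (f x) (p x)) := by
  have := cmp_natrec (g := fun _ : α => false) (h := fun a n b => b || p a n) hf (by fun_prop)
    (by fun_prop)
  refine this.of_eq fun x => ?_
  generalize f x = n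
  induction n with
  | zero => rfl
  | succ n ih => simp only [bex, ← ih]

@[fun_prop] theorem cmp_bcount {f : α → ℕ} {p : α → ℕ → Bool} (hf : Computable f)
    (hp : Computable (fun x : α × ℕ => p x.1 x.2)) :
    Computable (fun x => bcount (f x) (p x)) := by
  have := cmp_natrec (g := fun _ : α => 0) (h := fun a n b => b + bif p a n then 1 else 0) hf
    (by fun_prop) (by fun_prop)
  refine this.of_eq fun x => ?_
  generalize f x = n
  induction n with
  | zero => rfl
  | succ n ih => simp only [bcount, ← ih]

theorem cmp_listRangeMap {f : α → ℕ} {p : α → ℕ → β} (hf : Computable f)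
    (hp : Computable (fun x : α × ℕ => p x.1 x.2)) :
    Computable (fun x => (List.range (f x)).map (p x)) := by
  have := cmp_natrec (g := fun _ : α => ([] : List β)) (h := fun a n b => b ++ [p a n]) hf
    (by fun_prop) (by fun_prop)
  refine this.of_eq fun x => ?_
  generalize f x = n
  induction n with
  | zero => rfl
  | succ n ih => simp only [List.range_succ, List.map_append, ← ih, List.map_cons, List.map_nil]

theorem cmp_foldl {f : α → List β} {g : α → γ} {h : γ → β → γ} (hf : Computable f)
    (hg : Computable g) (hh : Computable (fun x : γ × β => h x.1 x.2)) :
    Computable (fun x => (f x).foldl h (g x)) := by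
  have := cmp_natrec (f := fun x => (f x).length) (g := g)
    (h := fun a n b => (((f a)[n]?).map (h b)).getD b) (by fun_prop) hg (by
      refine Computable.option_getD (Computable.option_map (f := fun x : α × ℕ × γ => (f x.1)[x.2.1]?)
        (g := fun x b => h x.2.2 b) (by fun_prop) ?_) (by fun_prop)
      exact Computable₂.mk (by fun_prop))
  refine this.of_eq fun x => ?_
  generalize f x = l
  have key : ∀ n ≤ l.length, (Nat.rec (g x) (fun n b => (Option.map (h b) l[n]?).getD b) n : γ)
      = (l.take n).foldl h (g x) := by
    intro n hn
    induction n with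
    | zero => rfl
    | succ n ih =>
      have hl : n < l.length := hn
      simp only [ih hl.le]
      rw [List.take_succ_eq_append_getElem hl, List.foldl_append]
      simp [hl]
  simpa using key l.length le_rfl

end Toolkit

end RandProb


open scoped Classical
open MeasureTheory

namespace RandProb

open Nat.Partrec (Code)
open Encodable

/-! ### Oracle codes with partial oracles, translation to ordinary codes -/

/-- Evaluation with a partial oracle. -/
def CodeO.evalP (O : ℕ →. ℕ) : CodeO → ℕ →. ℕ
  | .zero => pure 0
  | .succ => Nat.succ
  | .left => ↑fun n : ℕ => n.unpair.1
  | .right => ↑fun n : ℕ => n.unpair.2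
  | .oracle => O
  | .pair cf cg => fun n => Nat.pair <$> cf.evalP O n <*> cg.evalP O n
  | .comp cf cg => fun n => cg.evalP O n >>= cf.evalP O
  | .prec cf cg =>
    Nat.unpaired fun a n =>
      n.rec (cf.evalP O a) fun y IH => do
        let i ← IH
        cg.evalP O (Nat.pair a (Nat.pair y i))
  | .rfind' cf =>
    Nat.unpaired fun a m =>
      (Nat.rfind fun n => (fun m => m = 0) <$> cf.evalP O (Nat.pair a (n + m))).map (· + m)

/-- Replace the oracle by an ordinary code. -/
def CodeO.toCode (l : Code) : CodeO → Code
  | .zero => .zero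
  | .succ => .succ
  | .left => .left
  | .right => .right
  | .oracle => l
  | .pair cf cg => .pair (cf.toCode l) (cg.toCode l)
  | .comp cf cg => .comp (cf.toCode l) (cg.toCode l)
  | .prec cf cg => .prec (cf.toCode l) (cg.toCode l)
  | .rfind' cf => .rfind' (cf.toCode l)

/-- Ordinary codes as oracle codes. -/
def embed : Code → CodeO
  | .zero => .zero
  | .succ => .succ
  | .left => .left
  | .right => .right
  | .pair cf cg => .pair (embed cf) (embed cg)
  | .comp cf cg => .comp (embed cf) (embed cg)
  | .prec cf cg => .prec (embed cf) (embed cg)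
  | .rfind' cf => .rfind' (embed cf)

theorem evalP_total (O : ℕ → ℕ) (c : CodeO) : c.eval O = c.evalP (fun n => Part.some (O n)) := by
  induction c with
  | pair f g hf hg => (simp only [CodeO.eval, CodeO.evalP, hf, hg]; rfl)
  | comp f g hf hg => (simp only [CodeO.eval, CodeO.evalP, hf, hg]; rfl)
  | prec f g hf hg => (simp only [CodeO.eval, CodeO.evalP, hf, hg]; rfl)
  | rfind' f hf => (simp only [CodeO.eval, CodeO.evalP, hf]; rfl)
  | _ => rfl

theorem eval_toCode (l : Code) (c : CodeO) : (c.toCode l).eval = c.evalP l.eval := by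
  induction c with
  | pair f g hf hg => (simp only [CodeO.toCode, Code.eval, CodeO.evalP, hf, hg]; rfl)
  | comp f g hf hg => (simp only [CodeO.toCode, Code.eval, CodeO.evalP, hf, hg]; rfl)
  | prec f g hf hg => (simp only [CodeO.toCode, Code.eval, CodeO.evalP, hf, hg]; rfl)
  | rfind' f hf => (simp only [CodeO.toCode, Code.eval, CodeO.evalP, hf]; rfl)
  | _ => rfl

theorem eval_embed (O : ℕ → ℕ) (c : Code) : (embed c).eval O = c.eval := by
  induction c with
  | pair f g hf hg => (simp only [embed, CodeO.eval, Code.eval, hf, hg]; rfl)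
  | comp f g hf hg => (simp only [embed, CodeO.eval, Code.eval, hf, hg]; rfl)
  | prec f g hf hg => (simp only [embed, CodeO.eval, Code.eval, hf, hg]; rfl)
  | rfind' f hf => (simp only [embed, CodeO.eval, Code.eval, hf]; rfl)
  | _ => rfl

theorem mem_evalP_comp (O : ℕ →. ℕ) (f g : CodeO) (n m : ℕ) :
    m ∈ (CodeO.comp f g).evalP O n ↔ ∃ a ∈ g.evalP O n, m ∈ f.evalP O a := Part.mem_bind_iff

theorem mem_evalP_rfind (O : ℕ →. ℕ) (f : CodeO) (n m : ℕ) :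
    m ∈ (CodeO.rfind' f).evalP O n ↔ ∃ j, ((∃ x ∈ f.evalP O (Nat.pair n.unpair.1 (j + n.unpair.2)),
      decide (x = 0) = true) ∧ ∀ q < j, ∃ x ∈ f.evalP O (Nat.pair n.unpair.1 (q + n.unpair.2)),
      decide (x = 0) = false) ∧ j + n.unpair.2 = m := by
  refine (Part.mem_map_iff _).trans (exists_congr fun j => and_congr_left' ?_)
  refine Nat.mem_rfind.trans (and_congr (Part.mem_map_iff _) ?_)
  exact forall₂_congr fun q _ => Part.mem_map_iff _

/-- Use principle. -/
theorem evalP_cont (O : ℕ →. ℕ) (c : CodeO) : ∀ n m, m ∈ c.evalP O n →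
    ∃ k, ∀ O' : ℕ →. ℕ, (∀ i < k, ∀ v ∈ O i, v ∈ O' i) → m ∈ c.evalP O' n := by
  induction c with
  | oracle =>
    intro n m h
    exact ⟨n + 1, fun O' hO => hO n (Nat.lt_succ_self n) m h⟩
  | pair f g hf hg =>
    intro n m h
    simp only [CodeO.evalP, Seq.seq, Part.map_eq_map, Part.bind_eq_bind, Part.mem_bind_iff,
      Part.mem_map_iff] at h ⊢
    obtain ⟨_, ⟨a, ha, rfl⟩, b, hb, rfl⟩ := h
    obtain ⟨k1, h1⟩ := hf n a ha
    obtain ⟨k2, h2⟩ := hg n b hb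
    refine ⟨max k1 k2, fun O' hO => ⟨_, ⟨a, h1 O' fun i hi => hO i (lt_max_of_lt_left hi), rfl⟩, b,
      h2 O' fun i hi => hO i (lt_max_of_lt_right hi), rfl⟩⟩
  | comp f g hf hg =>
    intro n m h
    simp only [mem_evalP_comp] at h ⊢
    obtain ⟨a, ha, hm⟩ := h
    obtain ⟨k1, h1⟩ := hf a m hm
    obtain ⟨k2, h2⟩ := hg n a ha
    refine ⟨max k1 k2, fun O' hO => ⟨a, h2 O' fun i hi => hO i (lt_max_of_lt_right hi),
      h1 O' fun i hi => hO i (lt_max_of_lt_left hi)⟩⟩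
  | prec f g hf hg =>
    intro n m h
    simp only [CodeO.evalP, Nat.unpaired] at h ⊢
    generalize n.unpair.1 = a at h ⊢
    generalize n.unpair.2 = b at h ⊢
    induction b generalizing m with
    | zero => exact hf a m h
    | succ b ih =>
      simp only [Part.bind_eq_bind, Part.mem_bind_iff] at h ⊢
      obtain ⟨i, hi, hm⟩ := h
      obtain ⟨k1, h1⟩ := ih i hi
      obtain ⟨k2, h2⟩ := hg _ m hm
      refine ⟨max k1 k2, fun O' hO => ⟨i, h1 O' fun i hi => hO i (lt_max_of_lt_left hi),
        h2 O' fun i hi => hO i (lt_max_of_lt_right hi)⟩⟩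
  | rfind' f hf =>
    intro n m h
    simp only [mem_evalP_rfind] at h ⊢
    generalize n.unpair.1 = a at h ⊢
    generalize n.unpair.2 = b at h ⊢
    obtain ⟨j, ⟨⟨x, hx, hx0⟩, hlt⟩, rfl⟩ := h
    obtain ⟨k0, h0⟩ := hf _ x hx
    have : ∀ q : ℕ, ∃ k, q < j → ∀ O' : ℕ →. ℕ, (∀ i < k, ∀ v ∈ O i, v ∈ O' i) →
        ∃ y ∈ f.evalP O' (Nat.pair a (q + b)), decide (y = 0) = false := by
      intro q
      by_cases hq : q < j
      · obtain ⟨y, hy, hy0⟩ := hlt q hq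
        obtain ⟨k, hk⟩ := hf _ y hy
        exact ⟨k, fun _ O' hO => ⟨y, hk O' hO, hy0⟩⟩
      · exact ⟨0, fun h => absurd h hq⟩
    choose K hK using this
    refine ⟨max k0 ((Finset.range j).sup K), fun O' hO => ⟨j, ⟨⟨x, h0 O' fun i hi =>
      hO i (lt_max_of_lt_left hi), hx0⟩, ?_⟩, rfl⟩⟩
    intro q hq
    exact hK q hq O' fun i hi => hO i (lt_max_of_lt_right (lt_of_lt_of_le hi
      (Finset.le_sup (Finset.mem_range.2 hq))))
  | _ => intro n m h; exact ⟨0, fun _ _ => h⟩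

/-- Decoding of oracle codes. -/
def decO : ℕ → CodeO
  | 0 => .zero
  | 1 => .succ
  | 2 => .left
  | 3 => .right
  | 4 => .oracle
  | n + 5 =>
    have h0 : n / 4 < n + 5 := by omega
    have h1 : (n / 4).unpair.1 < n + 5 := lt_of_le_of_lt (Nat.unpair_left_le _) h0
    have h2 : (n / 4).unpair.2 < n + 5 := lt_of_le_of_lt (Nat.unpair_right_le _) h0
    if n % 4 = 0 then .pair (decO (n / 4).unpair.1) (decO (n / 4).unpair.2)
    else if n % 4 = 2 then .comp (decO (n / 4).unpair.1) (decO (n / 4).unpair.2)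
    else if n % 4 = 1 then .prec (decO (n / 4).unpair.1) (decO (n / 4).unpair.2)
    else .rfind' (decO (n / 4))

theorem decO_encode (c : CodeO) : decO c.encode = c := by
  induction c with
  | pair f g hf hg =>
    rw [CodeO.encode, decO]
    have h1 : 2 * (2 * Nat.pair f.encode g.encode) % 4 = 0 := by omega
    have h2 : 2 * (2 * Nat.pair f.encode g.encode) / 4 = Nat.pair f.encode g.encode := by omega
    rw [if_pos h1, h2]; simp [hf, hg]
  | comp f g hf hg =>
    rw [CodeO.encode, decO]
    have h1 : 2 * (2 * Nat.pair f.encode g.encode + 1) % 4 = 2 := by omega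
    have h2 : 2 * (2 * Nat.pair f.encode g.encode + 1) / 4 = Nat.pair f.encode g.encode := by omega
    rw [if_neg (by omega), if_pos h1, h2]; simp [hf, hg]
  | prec f g hf hg =>
    rw [CodeO.encode, show 2 * (2 * Nat.pair f.encode g.encode) + 6
      = (2 * (2 * Nat.pair f.encode g.encode) + 1) + 5 by ring, decO]
    have h1 : (2 * (2 * Nat.pair f.encode g.encode) + 1) % 4 = 1 := by omega
    have h2 : (2 * (2 * Nat.pair f.encode g.encode) + 1) / 4 = Nat.pair f.encode g.encode := by omega
    rw [if_neg (by omega), if_neg (by omega), if_pos h1, h2]; simp [hf, hg]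
  | rfind' f hf =>
    rw [CodeO.encode, show 2 * (2 * f.encode + 1) + 6 = (2 * (2 * f.encode + 1) + 1) + 5 by ring,
      decO]
    have h2 : (2 * (2 * f.encode + 1) + 1) / 4 = f.encode := by omega
    rw [if_neg (by omega), if_neg (by omega), if_neg (by omega), h2, hf]
  | _ => simp [CodeO.encode, decO]

theorem encode_decO (n : ℕ) : (decO n).encode = n := by
  induction n using Nat.strong_induction_on with
  | _ n ih =>
    match n with
    | 0 | 1 | 2 | 3 | 4 => simp [CodeO.encode, decO]
    | n + 5 =>
      have h0 : n / 4 < n + 5 := by omega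
      have h1 : (n / 4).unpair.1 < n + 5 := lt_of_le_of_lt (Nat.unpair_left_le _) h0
      have h2 : (n / 4).unpair.2 < n + 5 := lt_of_le_of_lt (Nat.unpair_right_le _) h0
      rw [decO]
      split_ifs with a b c
      · rw [CodeO.encode, ih _ h1, ih _ h2, Nat.pair_unpair]; omega
      · rw [CodeO.encode, ih _ h1, ih _ h2, Nat.pair_unpair]; omega
      · rw [CodeO.encode, ih _ h1, ih _ h2, Nat.pair_unpair]; omega
      · rw [CodeO.encode, ih _ h0]; omega

section
variable {α : Type*} [Primcodable α]
@[fun_prop] theorem cmp_cpair {f g : α → Code} (hf : Computable f) (hg : Computable g) :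
    Computable (fun x => Code.pair (f x) (g x)) := Code.primrec₂_pair.to_comp.comp hf hg
@[fun_prop] theorem cmp_ccomp {f g : α → Code} (hf : Computable f) (hg : Computable g) :
    Computable (fun x => Code.comp (f x) (g x)) := Code.primrec₂_comp.to_comp.comp hf hg
@[fun_prop] theorem cmp_cprec {f g : α → Code} (hf : Computable f) (hg : Computable g) :
    Computable (fun x => Code.prec (f x) (g x)) := Code.primrec₂_prec.to_comp.comp hf hg
@[fun_prop] theorem cmp_crfind {f : α → Code} (hf : Computable f) :
    Computable (fun x => Code.rfind' (f x)) := Code.primrec_rfind'.to_comp.comp hf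
@[fun_prop] theorem cmp_curry {f : α → Code} {g : α → ℕ} (hf : Computable f) (hg : Computable g) :
    Computable (fun x => Code.curry (f x) (g x)) := Code.primrec₂_curry.to_comp.comp hf hg
@[fun_prop] theorem cmp_evaln {k : α → ℕ} {c : α → Code} {n : α → ℕ} (hk : Computable k)
    (hc : Computable c) (hn : Computable n) :
    Computable (fun x => Code.evaln (k x) (c x) (n x)) :=
  Code.primrec_evaln.to_comp.comp ((hk.pair hc).pair hn)
end

/-- One step of the strong recursion computing `(decO n).toCode l`. -/
def tstepA (L : List Code) (m : ℕ) : Code :=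
  bif decide (m % 4 = 0) then
    .pair ((L[(m / 4).unpair.1]?).getD .zero) ((L[(m / 4).unpair.2]?).getD .zero) else
  bif decide (m % 4 = 2) then
    .comp ((L[(m / 4).unpair.1]?).getD .zero) ((L[(m / 4).unpair.2]?).getD .zero) else
  bif decide (m % 4 = 1) then
    .prec ((L[(m / 4).unpair.1]?).getD .zero) ((L[(m / 4).unpair.2]?).getD .zero) else
  .rfind' ((L[m / 4]?).getD .zero)

/-- One step of the strong recursion computing `(decO n).toCode l`. -/
def tstepB (l : Code) (L : List Code) (m : ℕ) : Code :=
  bif decide (m = 0) then .zero else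
  bif decide (m = 1) then .succ else
  bif decide (m = 2) then .left else
  bif decide (m = 3) then .right else
  bif decide (m = 4) then l else tstepA L (m - 5)

/-- One step of the strong recursion computing `(decO n).toCode l`. -/
def tstep (l : Code) (L : List Code) : Code := tstepB l L L.length

theorem tstepA_computable : Computable (fun x : List Code × ℕ => tstepA x.1 x.2) := by
  unfold tstepA
  have h : ∀ k : ℕ, Computable (fun x : List Code × ℕ => decide (x.2 % 4 = k)) :=
    fun k => by fun_prop
  have h1 : Computable (fun x : List Code × ℕ => (x.1[(x.2 / 4).unpair.1]?).getD .zero) := by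
    fun_prop
  have h2 : Computable (fun x : List Code × ℕ => (x.1[(x.2 / 4).unpair.2]?).getD .zero) := by
    fun_prop
  have h3 : Computable (fun x : List Code × ℕ => (x.1[x.2 / 4]?).getD .zero) := by
    fun_prop
  exact cmp_cond (h 0) (cmp_cpair h1 h2) (cmp_cond (h 2) (cmp_ccomp h1 h2)
    (cmp_cond (h 1) (cmp_cprec h1 h2) (cmp_crfind h3)))

theorem tstepB_computable :
    Computable (fun x : Code × List Code × ℕ => tstepB x.1 x.2.1 x.2.2) := by
  unfold tstepB
  have h : ∀ k : ℕ, Computable (fun x : Code × List Code × ℕ => decide (x.2.2 = k)) :=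
    fun k => cmp_beq (cmp_snd (cmp_snd cmp_id)) (cmp_const k)
  have h1 : Computable (fun x : Code × List Code × ℕ => tstepA x.2.1 (x.2.2 - 5)) :=
    tstepA_computable.comp (g := fun x : Code × List Code × ℕ => (x.2.1, x.2.2 - 5)) (by fun_prop)
  have c4 := cmp_cond (h 4) (cmp_fst cmp_id) h1
  have c3 := cmp_cond (h 3) (cmp_const Code.right) c4
  have c2 := cmp_cond (h 2) (cmp_const Code.left) c3
  have c1 := cmp_cond (h 1) (cmp_const Code.succ) c2
  exact cmp_cond (h 0) (cmp_const Code.zero) c1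

theorem tstep_computable : Computable (fun x : Code × List Code => tstep x.1 x.2) :=
  tstepB_computable.comp (g := fun x : Code × List Code => (x.1, x.2, x.2.length)) (by fun_prop)

theorem toCode_computable : Computable (fun x : Code × ℕ => (decO x.2).toCode x.1) := by
  refine Computable.nat_strong_rec (fun l n => (decO n).toCode l)
    (g := fun l L => some (tstep l L)) (Computable₂.mk ?_) ?_
  · have := tstep_computable
    fun_prop
  · intro l n
    congr 1
    match n with
    | 0 | 1 | 2 | 3 | 4 => simp [tstep, tstepB, decO, CodeO.toCode]
    | n + 5 =>
      have h0 : n / 4 < n + 5 := by omega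
      have h1 : (n / 4).unpair.1 < n + 5 := lt_of_le_of_lt (Nat.unpair_left_le _) h0
      have h2 : (n / 4).unpair.2 < n + 5 := lt_of_le_of_lt (Nat.unpair_right_le _) h0
      rw [decO]
      have hl : ∀ i < n + 5, (List.map (fun n => (decO n).toCode l) (List.range (n + 5)))[i]?
          = some ((decO i).toCode l) := by
        intro i hi
        simp [hi]
      simp only [tstep, tstepB, tstepA, List.length_map, List.length_range, Nat.add_sub_cancel, hl _ h0, hl _ h1,
        hl _ h2, Option.getD_some]
      split_ifs with a b c <;> simp [*, CodeO.toCode]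

theorem lookup_exists : ∃ lk : Code, ∀ (τ : List ℕ) (n : ℕ),
    lk.eval (Nat.pair (encode τ) n) = Part.ofOption (τ[n]?) := by
  have h : Computable (fun p : ℕ => ((decode (p.unpair.1) : Option (List ℕ)).getD [])[p.unpair.2]?) := by
    fun_prop
  obtain ⟨c, hc⟩ := Code.exists_code.1 (Partrec.nat_iff.1 h.ofOption)
  exact ⟨c, fun τ n => by rw [hc]; simp⟩

/-- A code for looking up a finite oracle. -/
noncomputable def lk : Code := lookup_exists.choose

theorem lk_spec (τ : List ℕ) (n : ℕ) :
    (lk.curry (encode τ)).eval n = Part.ofOption (τ[n]?) := by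
  rw [Code.eval_curry]; exact lookup_exists.choose_spec τ n

/-- Running code number `e` on `n` with finite oracle `τ` for `j` steps. -/
noncomputable def hstep (τ : List ℕ) (j e n : ℕ) : Option ℕ :=
  Code.evaln j ((decO e).toCode (lk.curry (encode τ))) n

theorem hstep_computable {α : Type*} [Primcodable α] {τ : α → List ℕ} {j e n : α → ℕ}
    (hτ : Computable τ) (hj : Computable j) (he : Computable e) (hn : Computable n) :
    Computable (fun x => hstep (τ x) (j x) (e x) (n x)) := by
  unfold hstep
  have h := toCode_computable
  have : Computable (fun x => (decO (e x)).toCode (lk.curry (encode (τ x)))) :=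
    h.comp (f := fun x : Code × ℕ => (decO x.2).toCode x.1)
      (g := fun x => (lk.curry (encode (τ x)), e x)) (by fun_prop)
  fun_prop

theorem hstep_sound {O : ℕ → ℕ} {i j n m : ℕ} {c : CodeO}
    (h : m ∈ hstep ((List.range i).map O) j c.encode n) : m ∈ c.eval O n := by
  have h := Code.evaln_sound h
  rw [eval_toCode, decO_encode] at h
  obtain ⟨k, hk⟩ := evalP_cont _ _ _ _ h
  rw [evalP_total]
  refine hk _ fun a _ v hv => ?_
  rw [lk_spec] at hv
  simp only [List.getElem?_map, Part.mem_ofOption, Option.mem_def, Option.map_eq_some_iff] at hv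
  obtain ⟨b, hb, rfl⟩ := hv
  rw [List.getElem?_eq_some_iff] at hb
  obtain ⟨_, rfl⟩ := hb
  simp

theorem hstep_complete {O : ℕ → ℕ} {n m : ℕ} {c : CodeO} (h : m ∈ c.eval O n) :
    ∃ i j, m ∈ hstep ((List.range i).map O) j c.encode n := by
  rw [evalP_total] at h
  obtain ⟨k, hk⟩ := evalP_cont _ _ _ _ h
  have := hk (lk.curry (encode ((List.range k).map O))).eval (fun a ha v hv => by
    rw [lk_spec]; simpa [ha] using hv)
  rw [← eval_toCode] at this
  obtain ⟨j, hj⟩ := Code.evaln_complete.1 this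
  exact ⟨k, j, by rw [hstep, decO_encode]; exact hj⟩

/-! ### Building oracle codes -/

/-- A family of total functions computable uniformly from a family of oracles. -/
def FamT {ι : Type} (O : ι → ℕ → ℕ) (T : ι → ℕ → ℕ) : Prop :=
  ∃ c : CodeO, ∀ i n, c.eval (O i) n = Part.some (T i n)

section Fam
variable {ι : Type} {O : ι → ℕ → ℕ} {S T : ι → ℕ → ℕ}

theorem FamT.comp (hS : FamT O S) (hT : FamT O T) : FamT O (fun i n => S i (T i n)) := by
  obtain ⟨c, hc⟩ := hS
  obtain ⟨d, hd⟩ := hT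
  refine ⟨.comp c d, fun i n => ?_⟩
  change (CodeO.eval (O i) d n).bind (CodeO.eval (O i) c) = _
  rw [hd]
  exact (Part.bind_some _ _).trans (hc _ _)

theorem FamT.pair (hS : FamT O S) (hT : FamT O T) :
    FamT O (fun i n => Nat.pair (S i n) (T i n)) := by
  obtain ⟨c, hc⟩ := hS
  obtain ⟨d, hd⟩ := hT
  exact ⟨.pair c d, fun i n => by simp [CodeO.eval, hc, hd, Seq.seq]⟩

theorem FamT.oracle : FamT O O := ⟨.oracle, fun _ _ => rfl⟩

theorem FamT.computable {h : ℕ → ℕ} (hh : Computable h) : FamT O (fun _ n => h n) := by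
  obtain ⟨c, hc⟩ := Code.exists_code.1 (Partrec.nat_iff.1 hh)
  exact ⟨embed c, fun i n => by rw [eval_embed, hc]; rfl⟩

theorem FamT.prec (a : ℕ) (hS : FamT O S) :
    FamT O (fun i n => (Nat.rec a (fun y r => S i (Nat.pair y r)) n : ℕ)) := by
  have h1 : FamT O (fun i n => S i n.unpair.2) :=
    hS.comp (FamT.computable (h := fun n => n.unpair.2) (by fun_prop))
  obtain ⟨c, hc⟩ := h1
  obtain ⟨z, hz⟩ : FamT O (fun _ _ => a) := FamT.computable (h := fun _ => a) (by fun_prop)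
  obtain ⟨p, hp⟩ : FamT O (fun _ n => Nat.pair 0 n) :=
    FamT.computable (h := fun n => Nat.pair 0 n) (by fun_prop)
  refine ⟨.comp (.prec z c) p, fun i n => ?_⟩
  change (CodeO.eval (O i) p n).bind (CodeO.eval (O i) (.prec z c)) = _
  rw [hp]
  refine (Part.bind_some _ _).trans ?_
  simp only [CodeO.eval, Nat.unpaired, Nat.unpair_pair, hz]
  induction n with
  | zero => rfl
  | succ n ih =>
    change Part.bind _ (fun r => CodeO.eval (O i) c (Nat.pair 0 (Nat.pair n r))) = _
    rw [ih, Part.bind_some, hc]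
    simp only [Nat.unpair_pair]

theorem FamT.rfind (hS : FamT O S) (hT : FamT O T) : ∃ c : CodeO, ∀ i n,
    c.eval (O i) n = (Nat.rfind fun k => Part.some (decide (S i (Nat.pair n k) = 0))).map
      fun k => T i (Nat.pair n k) := by
  obtain ⟨c, hc⟩ := hS
  obtain ⟨d, hd⟩ := hT
  obtain ⟨p, hp⟩ : FamT O (fun _ n => Nat.pair n 0) :=
    FamT.computable (h := fun n => Nat.pair n 0) (by fun_prop)
  obtain ⟨id', hid⟩ : FamT O (fun _ n => n) := FamT.computable (h := fun n => n) (by fun_prop)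
  refine ⟨.comp d (.pair id' (.comp (.rfind' c) p)), fun i n => ?_⟩
  have e1 : CodeO.eval (O i) (.comp (.rfind' c) p) n =
      Nat.rfind fun k => Part.some (decide (S i (Nat.pair n k) = 0)) := by
    change (CodeO.eval (O i) p n).bind (CodeO.eval (O i) (.rfind' c)) = _
    rw [hp]
    refine (Part.bind_some _ _).trans ?_
    simp only [CodeO.eval, hc, Nat.unpaired, Nat.unpair_pair, Nat.add_zero, Part.map_eq_map,
      Part.map_some]
    exact Part.map_id' (fun _ => rfl) _
  have e2 : CodeO.eval (O i) (.pair id' (.comp (.rfind' c) p)) n =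
      (Nat.rfind fun k => Part.some (decide (S i (Nat.pair n k) = 0))).map (Nat.pair n) := by
    change Seq.seq (Nat.pair <$> CodeO.eval (O i) id' n)
      (fun _ => CodeO.eval (O i) (.comp (.rfind' c) p) n) = _
    rw [e1, hid]
    simp [Seq.seq]
  change (CodeO.eval (O i) (.pair id' (.comp (.rfind' c) p)) n).bind (CodeO.eval (O i) d) = _
  rw [e2]
  ext m
  refine Part.mem_bind_iff.trans ?_
  have hd' : ∀ a, m ∈ CodeO.eval (O i) d a ↔ m = T i a := fun a => by rw [hd]; simp
  refine (exists_congr fun a => and_congr_right fun _ => hd' a).trans ?_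
  simp only [Part.mem_map_iff]
  constructor
  · rintro ⟨_, ⟨k, hk, rfl⟩, rfl⟩
    exact ⟨k, hk, rfl⟩
  · rintro ⟨k, hk, rfl⟩
    exact ⟨_, ⟨k, hk, rfl⟩, rfl⟩

end Fam

/-- Every computable functional on prefixes is realised by an oracle machine. -/
theorem machine_exists (G : List Bool → ℕ → Option ℕ)
    (hG : Computable (fun x : List Bool × ℕ => G x.1 x.2)) :
    ∃ c : CodeO, ∀ X n, evalO X c n = Nat.rfindOpt (fun k => G (initSeg X k) n) := by
  have hpre : FamT oX (fun X k => encode (initSeg X k)) := by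
    have h1 : FamT oX (fun X n => encode (((decode n.unpair.2 : Option (List Bool)).getD []) ++
        [decide (oX X n.unpair.1 = 1)])) := by
      have a : FamT oX (fun X n => Nat.pair (oX X n.unpair.1) n.unpair.2) :=
        (FamT.oracle.comp (FamT.computable (h := fun n => n.unpair.1) (by fun_prop))).pair
          (FamT.computable (h := fun n => n.unpair.2) (by fun_prop))
      have b : FamT oX (fun _ n => encode (((decode n.unpair.2 : Option (List Bool)).getD []) ++
        [decide (n.unpair.1 = 1)])) := FamT.computable (h := fun n =>
          encode (((decode n.unpair.2 : Option (List Bool)).getD []) ++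
        [decide (n.unpair.1 = 1)])) (by fun_prop)
      have := b.comp a
      simpa only [Nat.unpair_pair] using this
    have h2 := h1.prec (encode ([] : List Bool))
    convert h2 using 3 with X k
    induction k with
    | zero => rfl
    | succ k ih =>
      simp only [← ih]
      simp only [Nat.unpair_pair, encodek, Option.getD_some, initSeg, List.range_succ,
        List.map_append, List.map_cons, List.map_nil, oX]
      cases X k <;> simp
  have hpair : FamT oX (fun X n => Nat.pair (encode (initSeg X n.unpair.2)) n.unpair.1) :=
    (hpre.comp (FamT.computable (h := fun n => n.unpair.2) (by fun_prop))).pair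
      (FamT.computable (h := fun n => n.unpair.1) (by fun_prop))
  have hS : FamT oX (fun X n => bif (G (initSeg X n.unpair.2) n.unpair.1).isSome then 0 else 1) := by
    have b : FamT oX (fun _ n => bif (G ((decode n.unpair.1 : Option (List Bool)).getD [])
        n.unpair.2).isSome then 0 else 1) :=
      FamT.computable (h := fun n => bif (G ((decode n.unpair.1 : Option (List Bool)).getD [])
        n.unpair.2).isSome then 0 else 1) (by fun_prop)
    have := b.comp hpair
    simpa only [Nat.unpair_pair, encodek, Option.getD_some] using this
  have hT : FamT oX (fun X n => (G (initSeg X n.unpair.2) n.unpair.1).getD 0) := by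
    have b : FamT oX (fun _ n => (G ((decode n.unpair.1 : Option (List Bool)).getD [])
        n.unpair.2).getD 0) :=
      FamT.computable (h := fun n => (G ((decode n.unpair.1 : Option (List Bool)).getD [])
        n.unpair.2).getD 0) (by fun_prop)
    have := b.comp hpair
    simpa only [Nat.unpair_pair, encodek, Option.getD_some] using this
  obtain ⟨c, hc⟩ := hS.rfind hT
  refine ⟨c, fun X n => ?_⟩
  rw [evalO, hc]
  simp only [Nat.unpair_pair, Nat.rfindOpt]
  have e1 : ∀ k, decide ((bif (G (initSeg X k) n).isSome then 0 else 1) = 0)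
      = (G (initSeg X k) n).isSome := by
    intro k; cases (G (initSeg X k) n).isSome <;> rfl
  simp only [e1]
  ext m
  simp only [Part.mem_map_iff, Part.mem_bind_iff]
  refine exists_congr fun k => and_congr_right fun hk => ?_
  have := (Nat.mem_rfind.1 hk).1
  simp only [Part.mem_some_iff] at this
  obtain ⟨v, hv⟩ := Option.isSome_iff_exists.1 this.symm
  simp [hv, eq_comm]

end RandProb


open scoped Classical
open MeasureTheory

namespace RandProb

open Nat.Partrec (Code)
open Encodable

/-! ### Post's theorem at level two -/

/-- `S` is a `Σ₂` set, in normal form. -/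
def Sig2 (S : Set ℕ) : Prop := ∃ R : ℕ → ℕ → ℕ → Bool,
  Computable (fun x : ℕ × ℕ × ℕ => R x.1 x.2.1 x.2.2) ∧ ∀ m, m ∈ S ↔ ∃ s, ∀ t, R m s t = true

/-- Approximation to the halting problem. -/
def Kt (t i : ℕ) : Bool := (Code.evaln t ((decO i).toCode Code.zero) i).isSome

theorem Kt_computable {α : Type*} [Primcodable α] {t i : α → ℕ} (ht : Computable t)
    (hi : Computable i) : Computable (fun x => Kt (t x) (i x)) := by
  unfold Kt
  have : Computable (fun x => (decO (i x)).toCode Code.zero) :=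
    toCode_computable.comp (f := fun x : Code × ℕ => (decO x.2).toCode x.1)
      (g := fun x => (Code.zero, i x)) (by fun_prop)
  fun_prop

theorem Kt_mono {t t' i : ℕ} (h : t ≤ t') (hk : Kt t i = true) : Kt t' i = true := by
  unfold Kt at *
  obtain ⟨v, hv⟩ := Option.isSome_iff_exists.1 hk
  exact Option.isSome_iff_exists.2 ⟨v, Code.evaln_mono h hv⟩

theorem iterJump_one (i : ℕ) : iterJump 1 i = if ∃ t, Kt t i = true then 1 else 0 := by
  change jump (fun _ => 0) i = _
  unfold jump
  refine if_congr ?_ rfl rfl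
  have h0 : ∀ c : CodeO, c.eval (fun _ => 0) = (c.toCode Code.zero).eval := by
    intro c
    rw [eval_toCode, evalP_total]; rfl
  constructor
  · rintro ⟨c, rfl, h⟩
    rw [h0] at h
    obtain ⟨v, hv⟩ := Part.dom_iff_mem.1 h
    obtain ⟨k, hk⟩ := Code.evaln_complete.1 hv
    exact ⟨k, Option.isSome_iff_exists.2 ⟨v, by rw [decO_encode]; exact hk⟩⟩
  · rintro ⟨t, ht⟩
    refine ⟨decO i, encode_decO i, ?_⟩
    obtain ⟨v, hv⟩ := Option.isSome_iff_exists.1 ht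
    rw [h0]
    exact Part.dom_iff_mem.2 ⟨v, Code.evaln_sound hv⟩

theorem Sig2_of_CeIn {S : Set ℕ} (h : CeIn (iterJump 1) S) : Sig2 S := by
  obtain ⟨c, rfl⟩ := h
  let D : ℕ → List ℕ := fun s => (decode s.unpair.1 : Option (List ℕ)).getD []
  have hD : Computable D := by unfold D; fun_prop
  refine ⟨fun m s t => (hstep (D s) s.unpair.2.unpair.1 c.encode m).isSome &&
    ball (D s).length (fun i => (decide (((D s)[i]?).getD 0 = 1) && Kt s.unpair.2.unpair.2 i) ||
      (decide (((D s)[i]?).getD 0 = 0) && !Kt t i)), ?_, ?_⟩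
  · refine cmp_and (cmp_isSome (hstep_computable (by fun_prop) (by fun_prop) (by fun_prop)
      (by fun_prop))) (cmp_ball (by fun_prop) (cmp_or (cmp_and (by fun_prop)
        (Kt_computable (by fun_prop) (by fun_prop))) (cmp_and (by fun_prop)
        (cmp_not (Kt_computable (by fun_prop) (by fun_prop))))))
  · intro m
    constructor
    · intro hm
      obtain ⟨v, hv⟩ := Part.dom_iff_mem.1 hm
      obtain ⟨i, j, hij⟩ := hstep_complete hv
      have : ∃ t0, ∀ a < i, (∃ t, Kt t a = true) → Kt t0 a = true := by
        have : ∀ a, ∃ t, (∃ t, Kt t a = true) → Kt t a = true := by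
          intro a
          by_cases h : ∃ t, Kt t a = true
          · exact ⟨h.choose, fun _ => h.choose_spec⟩
          · exact ⟨0, fun h' => absurd h' h⟩
        choose F hF using this
        exact ⟨(Finset.range i).sup F, fun a ha h => Kt_mono
          (Finset.le_sup (f := F) (Finset.mem_range.2 ha)) (hF a h)⟩
      obtain ⟨t0, ht0⟩ := this
      refine ⟨Nat.pair (encode ((List.range i).map (iterJump 1))) (Nat.pair j t0), fun t => ?_⟩
      simp only [D, Nat.unpair_pair, encodek, Option.getD_some, Bool.and_eq_true, ball_iff,
        List.length_map, List.length_range]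
      refine ⟨Option.isSome_iff_exists.2 ⟨v, hij⟩, fun a ha => ?_⟩
      simp only [List.getElem?_map, List.getElem?_range ha, Option.map_some, Option.getD_some,
        iterJump_one]
      by_cases h : ∃ t, Kt t a = true
      · simp [h, ht0 a ha h]
      · simp only [not_exists] at h
        simp [h]
    · rintro ⟨s, hs⟩
      simp only [Bool.and_eq_true, ball_iff, forall_and] at hs
      obtain ⟨h1, h2⟩ := hs
      obtain ⟨v, hv⟩ := Option.isSome_iff_exists.1 (h1 0)
      have : D s = (List.range (D s).length).map (iterJump 1) := by
        refine List.ext_getElem (by simp) fun a ha _ => ?_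
        simp only [List.getElem_map, List.getElem_range, iterJump_one]
        have h3 := fun t => h2 t a ha
        simp only [List.getElem?_eq_getElem ha, Option.getD_some, Bool.or_eq_true,
          Bool.and_eq_true, decide_eq_true_eq, Bool.not_eq_true'] at h3
        by_cases h : ∃ t, Kt t a = true
        · rw [if_pos h]
          obtain ⟨t, ht⟩ := h
          have := h3 t
          simp only [ht] at this
          simpa using this.elim (fun h => h.1) (fun h => by simp at h)
        · rw [if_neg h]
          simp only [not_exists] at h
          have := h3 0
          simpa [h] using this
      rw [this] at hv
      exact Part.dom_iff_mem.2 ⟨v, hstep_sound hv⟩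

/-- An explicit constant code. -/
def constO : ℕ → CodeO
  | 0 => .zero
  | n + 1 => .comp .succ (constO n)

theorem constO_eval (O : ℕ → ℕ) (n x : ℕ) : (constO n).eval O x = Part.some n := by
  induction n with
  | zero => rfl
  | succ n ih =>
    change ((constO n).eval O x).bind (CodeO.eval O CodeO.succ) = _
    rw [ih]
    exact (Part.bind_some _ _)

theorem constO_computable : Computable (fun n => (constO n).encode) := by
  have := cmp_natrec (f := fun n : ℕ => n) (g := fun _ : ℕ => 0)
    (h := fun _ _ r => 2 * (2 * Nat.pair 1 r + 1) + 5) (by fun_prop) (by fun_prop) (by fun_prop)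
  refine this.of_eq fun n => ?_
  induction n with
  | zero => rfl
  | succ n ih => simp only [constO, CodeO.encode, ← ih]

theorem rfind_some_dom (p : ℕ → Bool) :
    (Nat.rfind fun k => Part.some (p k)).Dom ↔ ∃ k, p k = true := by
  refine (Nat.rfind_dom (p := fun k => Part.some (p k))).trans ?_
  constructor
  · rintro ⟨k, hk, _⟩
    exact ⟨k, (Part.mem_some_iff.1 hk).symm⟩
  · rintro ⟨k, hk⟩
    exact ⟨k, Part.mem_some_iff.2 hk.symm, fun _ => trivial⟩

theorem CeIn_of_Sig2 {S : Set ℕ} (h : Sig2 S) : CeIn (iterJump 1) S := by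
  obtain ⟨R, hR, hS⟩ := h
  obtain ⟨r, hr⟩ : ∃ r : CodeO, ∀ (_ : Unit) n, r.eval (fun _ => 0) n
      = (Nat.rfind fun k => Part.some (decide ((bif R n.unpair.1 n.unpair.2 k then 1 else 0) = 0))).map
        fun k => 0 := by
    have a : FamT (fun (_ : Unit) (_ : ℕ) => 0) (fun _ n =>
        bif R n.unpair.1.unpair.1 n.unpair.1.unpair.2 n.unpair.2 then 1 else 0) :=
      FamT.computable (h := fun n => bif R n.unpair.1.unpair.1 n.unpair.1.unpair.2 n.unpair.2
        then 1 else 0) (by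
          have := hR.comp (g := fun n : ℕ => (n.unpair.1.unpair.1, n.unpair.1.unpair.2, n.unpair.2))
            (by fun_prop)
          exact cmp_cond this (by fun_prop) (by fun_prop))
    have b : FamT (fun (_ : Unit) (_ : ℕ) => 0) (fun _ _ => 0) :=
      FamT.computable (h := fun _ => 0) (by fun_prop)
    obtain ⟨r, hr⟩ := a.rfind b
    refine ⟨r, fun i n => ?_⟩
    rw [hr i n]
    simp
  let q : ℕ → ℕ := fun n => (CodeO.comp r (constO n)).encode
  have hq : Computable q := by
    have := constO_computable
    simp only [q, CodeO.encode]
    fun_prop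
  have hj : ∀ n, iterJump 1 (q n) = 0 ↔ ∀ t, R n.unpair.1 n.unpair.2 t = true := by
    intro n
    have e : (CodeO.eval (fun _ => 0) (CodeO.comp r (constO n)) (q n)).Dom ↔
        ¬ ∀ t, R n.unpair.1 n.unpair.2 t = true := by
      have : CodeO.eval (fun _ => 0) (CodeO.comp r (constO n)) (q n) = r.eval (fun _ => 0) n := by
        change ((constO n).eval _ _).bind (CodeO.eval _ r) = _
        rw [constO_eval]
        exact (Part.bind_some _ _)
      rw [this, hr ()]
      refine (rfind_some_dom _).trans ?_
      push Not
      refine exists_congr fun k => ?_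
      cases R n.unpair.1 n.unpair.2 k <;> simp
    change jump (fun _ => 0) (q n) = 0 ↔ _
    unfold jump
    have e2 : (∃ c : CodeO, c.encode = q n ∧ (c.eval (fun _ => 0) (q n)).Dom) ↔
        ¬ ∀ t, R n.unpair.1 n.unpair.2 t = true := by
      rw [← e]
      constructor
      · rintro ⟨c, hc, h⟩
        have : c = CodeO.comp r (constO n) := by
          rw [← decO_encode c, hc, decO_encode]
        rwa [← this]
      · intro h
        exact ⟨_, rfl, h⟩
    by_cases h : ∃ c : CodeO, c.encode = q n ∧ (c.eval (fun _ => 0) (q n)).Dom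
    · have h' := e2.1 h
      simp [h, h']
    · have h' := not_not.1 (fun x => h (e2.2 x))
      simp [h, h']
  have f1 : FamT (fun (_ : Unit) => iterJump 1) (fun _ n => iterJump 1 (q n)) :=
    FamT.oracle.comp (FamT.computable hq)
  obtain ⟨c, hc⟩ := f1.rfind f1
  refine ⟨c, Set.ext fun m => ?_⟩
  change m ∈ S ↔ (CodeO.eval (iterJump 1) c m).Dom
  rw [hc (), hS]
  refine Iff.symm ((rfind_some_dom _).trans ?_)
  simp only [decide_eq_true_eq, hj, Nat.unpair_pair]

theorem CeIn_iff_Sig2 {S : Set ℕ} : CeIn (iterJump 1) S ↔ Sig2 S :=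
  ⟨Sig2_of_CeIn, CeIn_of_Sig2⟩

end RandProb


open scoped Classical
open MeasureTheory

namespace RandProb

open Encodable

/-! ### Computable rational arithmetic -/

/-- Names of rationals: `(a, b, c)` names `(a - b) / (c + 1)`. -/
abbrev Q3 := ℕ × ℕ × ℕ

/-- The real number named. -/
noncomputable def qv (x : Q3) : ℝ := ((x.1 : ℝ) - x.2.1) / (x.2.2 + 1)

/-- addition -/
def qadd (x y : Q3) : Q3 :=
  (x.1 * (y.2.2 + 1) + y.1 * (x.2.2 + 1), x.2.1 * (y.2.2 + 1) + y.2.1 * (x.2.2 + 1),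
    (x.2.2 + 1) * (y.2.2 + 1) - 1)

/-- subtraction -/
def qsub (x y : Q3) : Q3 :=
  (x.1 * (y.2.2 + 1) + y.2.1 * (x.2.2 + 1), x.2.1 * (y.2.2 + 1) + y.1 * (x.2.2 + 1),
    (x.2.2 + 1) * (y.2.2 + 1) - 1)

/-- multiplication -/
def qmul (x y : Q3) : Q3 :=
  (x.1 * y.1 + x.2.1 * y.2.1, x.1 * y.2.1 + x.2.1 * y.1, (x.2.2 + 1) * (y.2.2 + 1) - 1)

/-- strict order -/
def qlt (x y : Q3) : Bool :=
  decide (x.1 * (y.2.2 + 1) + y.2.1 * (x.2.2 + 1) < y.1 * (x.2.2 + 1) + x.2.1 * (y.2.2 + 1))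

/-- dyadic rational `k / 2 ^ d` -/
def qdy (k d : ℕ) : Q3 := (k, 0, 2 ^ d - 1)

theorem den_cast (m n : ℕ) : (((m + 1) * (n + 1) - 1 : ℕ) : ℝ) + 1 = (m + 1) * (n + 1) := by
  rw [Nat.cast_sub (Nat.mul_pos (Nat.succ_pos _) (Nat.succ_pos _))]; push_cast; ring

@[simp] theorem qv_add (x y : Q3) : qv (qadd x y) = qv x + qv y := by
  unfold qv qadd
  have h1 : (x.2.2 : ℝ) + 1 ≠ 0 := by positivity
  have h2 : (y.2.2 : ℝ) + 1 ≠ 0 := by positivity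
  simp only [den_cast]
  push_cast
  field_simp
  ring

@[simp] theorem qv_sub (x y : Q3) : qv (qsub x y) = qv x - qv y := by
  unfold qv qsub
  have h1 : (x.2.2 : ℝ) + 1 ≠ 0 := by positivity
  have h2 : (y.2.2 : ℝ) + 1 ≠ 0 := by positivity
  simp only [den_cast]
  push_cast
  field_simp
  ring

@[simp] theorem qv_mul (x y : Q3) : qv (qmul x y) = qv x * qv y := by
  unfold qv qmul
  have h1 : (x.2.2 : ℝ) + 1 ≠ 0 := by positivity
  have h2 : (y.2.2 : ℝ) + 1 ≠ 0 := by positivity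
  simp only [den_cast]
  push_cast
  field_simp
  ring

@[simp] theorem qlt_iff (x y : Q3) : qlt x y = true ↔ qv x < qv y := by
  unfold qv qlt
  have h1 : 0 < (x.2.2 : ℝ) + 1 := by positivity
  have h2 : 0 < (y.2.2 : ℝ) + 1 := by positivity
  rw [decide_eq_true_eq, div_lt_div_iff₀ h1 h2, ← Nat.cast_lt (α := ℝ)]
  push_cast
  constructor <;> intro h <;> linarith

@[simp] theorem qv_dy (k d : ℕ) : qv (qdy k d) = k / 2 ^ d := by
  unfold qv qdy
  have : (1 : ℕ) ≤ 2 ^ d := Nat.one_le_two_pow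
  push_cast [Nat.cast_sub this]
  simp

section
variable {α : Type*} [Primcodable α]

@[fun_prop] theorem cmp_qadd {f g : α → Q3} (hf : Computable f) (hg : Computable g) :
    Computable (fun x => qadd (f x) (g x)) := by
  unfold qadd; fun_prop
@[fun_prop] theorem cmp_qsub {f g : α → Q3} (hf : Computable f) (hg : Computable g) :
    Computable (fun x => qsub (f x) (g x)) := by
  unfold qsub; fun_prop
@[fun_prop] theorem cmp_qmul {f g : α → Q3} (hf : Computable f) (hg : Computable g) :
    Computable (fun x => qmul (f x) (g x)) := by
  unfold qmul; fun_prop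
@[fun_prop] theorem cmp_qlt {f g : α → Q3} (hf : Computable f) (hg : Computable g) :
    Computable (fun x => qlt (f x) (g x)) := by
  unfold qlt; fun_prop
@[fun_prop] theorem cmp_qdy {f g : α → ℕ} (hf : Computable f) (hg : Computable g) :
    Computable (fun x => qdy (f x) (g x)) := by
  unfold qdy; fun_prop
end

/-- Decoding of the standard numbering of `ℚ`. -/
def dq (m : ℕ) : Q3 :=
  bif decide (m.unpair.1 % 2 = 0) then (m.unpair.1 / 2, 0, m.unpair.2 - 1)
  else (0, (m.unpair.1 + 1) / 2, m.unpair.2 - 1)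

/-- Absolute value of the numerator of a code. -/
def dnum (m : ℕ) : ℕ :=
  bif decide (m.unpair.1 % 2 = 0) then m.unpair.1 / 2 else (m.unpair.1 + 1) / 2

/-- Validity of a code of a rational. -/
def isq (m : ℕ) : Bool :=
  decide (0 < m.unpair.2) && ball (m.unpair.2 + 1) (fun d => decide (d ≤ 1) ||
    !(decide (dnum m % d = 0) && decide (m.unpair.2 % d = 0)))

@[fun_prop] theorem cmp_dq {α : Type*} [Primcodable α] {f : α → ℕ} (hf : Computable f) :
    Computable (fun x => dq (f x)) := by
  unfold dq; fun_prop

@[fun_prop] theorem cmp_isq {α : Type*} [Primcodable α] {f : α → ℕ} (hf : Computable f) :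
    Computable (fun x => isq (f x)) := by
  have : Computable dnum := by unfold dnum; fun_prop
  unfold isq; fun_prop

theorem encode_rat (q : ℚ) : encode q = Nat.pair (encode q.num) q.den := rfl

theorem encode_int_nat (n : ℕ) : encode (Int.ofNat n) = 2 * n := rfl
theorem encode_int_neg (n : ℕ) : encode (Int.negSucc n) = 2 * n + 1 := rfl

theorem qv_dq (q : ℚ) : qv (dq (encode q)) = (q : ℝ) := by
  rw [encode_rat]
  have hd : (1 : ℕ) ≤ q.den := q.den_pos
  have hq : (q : ℝ) = (q.num : ℝ) / (q.den : ℝ) := Rat.cast_def q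
  rw [hq]
  unfold dq
  simp only [Nat.unpair_pair]
  cases h : q.num with
  | ofNat n =>
    rw [encode_int_nat, show decide (2 * n % 2 = 0) = true by simp]
    simp only [cond_true, qv]
    push_cast [Nat.cast_sub hd]
    simp
  | negSucc n =>
    rw [encode_int_neg, show decide ((2 * n + 1) % 2 = 0) = false by simp]
    simp only [cond_false, qv, show (2 * n + 1 + 1) / 2 = n + 1 by omega, Int.cast_negSucc]
    push_cast [Nat.cast_sub hd]
    simp

theorem coprime_iff_bdd (a b : ℕ) (hb : 0 < b) :
    Nat.Coprime a b ↔ ∀ d < b + 1, d ≤ 1 ∨ ¬ (a % d = 0 ∧ b % d = 0) := by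
  constructor
  · intro h d _
    by_contra hc
    push Not at hc
    have h1 : d ∣ Nat.gcd a b := Nat.dvd_gcd (Nat.dvd_of_mod_eq_zero hc.2.1)
      (Nat.dvd_of_mod_eq_zero hc.2.2)
    rw [h] at h1
    have := Nat.le_of_dvd one_pos h1
    omega
  · intro h
    have hg : 0 < Nat.gcd a b := Nat.gcd_pos_of_pos_right _ hb
    rcases h (Nat.gcd a b) (Nat.lt_succ_of_le (Nat.le_of_dvd hb (Nat.gcd_dvd_right _ _))) with h | h
    · exact le_antisymm h hg
    · exact absurd ⟨Nat.mod_eq_zero_of_dvd (Nat.gcd_dvd_left _ _),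
        Nat.mod_eq_zero_of_dvd (Nat.gcd_dvd_right _ _)⟩ h

theorem isq_iff (m : ℕ) : isq m = true ↔ ∃ q : ℚ, encode q = m := by
  have e : isq m = true ↔ 0 < m.unpair.2 ∧ Nat.Coprime (dnum m) m.unpair.2 := by
    unfold isq
    rw [Bool.and_eq_true, decide_eq_true_eq]
    refine and_congr_right fun h => ?_
    rw [coprime_iff_bdd _ _ h]
    simp [imp_iff_not_or]
  rw [e]
  have hz : ∀ z : ℕ, ∃ i : ℤ, encode i = z ∧
      i.natAbs = bif decide (z % 2 = 0) then z / 2 else (z + 1) / 2 := by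
    intro z
    by_cases h : z % 2 = 0
    · refine ⟨Int.ofNat (z / 2), ?_, ?_⟩
      · rw [encode_int_nat]; omega
      · simp only [h, decide_true, cond_true]; rfl
    · refine ⟨Int.negSucc (z / 2), ?_, ?_⟩
      · rw [encode_int_neg]; omega
      · simp only [h, decide_false, cond_false, Int.natAbs_negSucc]; omega
  constructor
  · rintro ⟨h1, h2⟩
    obtain ⟨i, hi, hi2⟩ := hz m.unpair.1
    refine ⟨⟨i, m.unpair.2, by omega, ?_⟩, ?_⟩
    · rw [hi2]; exact h2
    · rw [encode_rat]
      simp only [hi, Nat.pair_unpair]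
  · rintro ⟨q, rfl⟩
    have : dnum (encode q) = q.num.natAbs := by
      rw [encode_rat]
      unfold dnum
      simp only [Nat.unpair_pair]
      cases h : q.num with
      | ofNat n => rw [encode_int_nat]; simp
      | negSucc n => rw [encode_int_neg, show decide ((2 * n + 1) % 2 = 0) = false by simp]
                     simp only [cond_false, Int.natAbs_negSucc]; omega
    rw [this, encode_rat, Nat.unpair_pair]
    exact ⟨q.den_pos, q.reduced⟩

theorem encode_ratpair (p q : ℚ) : encode (p, q) = Nat.pair (encode p) (encode q) := rfl

end RandProb


open scoped Classical
open MeasureTheory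

namespace RandProb

open Encodable Filter Topology

/-! ### Limit-computable representations of right-`Σ₂` reals -/

/-- `A N T` is computable and for each `N` eventually has the value `a N`. -/
def Rep (A : ℕ → ℕ → Q3) (a : ℕ → ℝ) : Prop :=
  Computable (fun x : ℕ × ℕ => A x.1 x.2) ∧ ∀ N, ∀ᶠ T in atTop, qv (A N T) = a N

/-- One step of the approximation extracted from a `Σ₂` right cut. -/
def cutS (R : ℕ → ℕ → ℕ → Bool) (T n : ℕ) (r : Q3) : Q3 :=
  bif ball (T + 1) (fun t => R n.unpair.1 n.unpair.2 t) && qlt (dq n.unpair.1) r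
    then dq n.unpair.1 else r

/-- The approximation extracted from a `Σ₂` right cut. -/
def cutA (R : ℕ → ℕ → ℕ → Bool) (N T : ℕ) : Q3 := Nat.rec (qdy 1 0) (cutS R T) N

theorem cutA_succ (R : ℕ → ℕ → ℕ → Bool) (N T : ℕ) : cutA R (N + 1) T =
    bif ball (T + 1) (fun t => R N.unpair.1 N.unpair.2 t) && qlt (dq N.unpair.1) (cutA R N T)
    then dq N.unpair.1 else cutA R N T := rfl

/-- Every `Π₁` condition is eventually decided by its finite approximations. -/
theorem ball_eventually (p : ℕ → Bool) :
    ∀ᶠ T in atTop, ball (T + 1) p = decide (∀ t, p t = true) := by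
  by_cases h : ∀ t, p t = true
  · refine Eventually.of_forall fun T => ?_
    rw [decide_eq_true h, ball_iff]
    exact fun i _ => h i
  · have h' := h
    push Not at h'
    obtain ⟨t, ht⟩ := h'
    refine eventually_atTop.2 ⟨t, fun T hT => ?_⟩
    rw [decide_eq_false h, Bool.eq_false_iff]
    intro hb
    exact ht ((ball_iff _ _).1 hb t (Nat.lt_succ_of_le hT))

theorem rep_of_right {α : ℝ} (h : RightCeIn (iterJump 1) α) (h1 : α < 1) :
    ∃ A a, Rep A a ∧ Antitone a ∧ (∀ N, α < a N) ∧ (∀ N, a N ≤ 1) ∧ Tendsto a atTop (𝓝 α) := by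
  obtain ⟨R, hR, hS⟩ := CeIn_iff_Sig2.1 h
  have hcomp : Computable (fun x : ℕ × ℕ => cutA R x.1 x.2) := by
    have hs : Computable (fun x : (ℕ × ℕ) × ℕ × Q3 => cutS R x.1.2 x.2.1 x.2.2) := by
      unfold cutS
      fun_prop
    exact cmp_natrec (f := fun x : ℕ × ℕ => x.1) (g := fun _ => qdy 1 0)
      (h := fun x n r => cutS R x.2 n r) (by fun_prop) (by fun_prop) hs
  have key : ∀ N, ∃ a : ℝ, α < a ∧ ∀ᶠ T in atTop, qv (cutA R N T) = a := by
    intro N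
    induction N with
    | zero => exact ⟨1, h1, Eventually.of_forall fun T => by
        change qv (qdy 1 0) = 1
        simp⟩
    | succ N ih =>
      obtain ⟨a, ha, hT⟩ := ih
      by_cases hb : (∀ t, R N.unpair.1 N.unpair.2 t = true) ∧ qv (dq N.unpair.1) < a
      · refine ⟨qv (dq N.unpair.1), ?_, ?_⟩
        · obtain ⟨q, hq, hq2⟩ := (hS N.unpair.1).2 ⟨_, hb.1⟩
          rw [← hq, qv_dq]
          exact hq2
        · filter_upwards [hT, ball_eventually (fun t => R N.unpair.1 N.unpair.2 t)] with T h1 h2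
          rw [cutA_succ, h2, decide_eq_true hb.1, (qlt_iff _ _).2 (by rw [h1]; exact hb.2)]
          rfl
      · refine ⟨a, ha, ?_⟩
        filter_upwards [hT, ball_eventually (fun t => R N.unpair.1 N.unpair.2 t)] with T h1 h2
        rw [cutA_succ, h2]
        by_cases hx : ∀ t, R N.unpair.1 N.unpair.2 t = true
        · have : qlt (dq N.unpair.1) (cutA R N T) = false := by
            rw [Bool.eq_false_iff]
            intro h
            rw [qlt_iff, h1] at h
            exact hb ⟨hx, h⟩
          rw [this, Bool.and_false]
          exact h1
        · rw [decide_eq_false hx, Bool.false_and]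
          exact h1
  choose a ha hT using key
  have hle : ∀ N T, qv (cutA R (N + 1) T) ≤ qv (cutA R N T) := by
    intro N T
    rw [cutA_succ]
    cases h : (ball (T + 1) (fun t => R N.unpair.1 N.unpair.2 t) &&
      qlt (dq N.unpair.1) (cutA R N T))
    · exact le_rfl
    · rw [Bool.and_eq_true, qlt_iff] at h
      exact h.2.le
  have hanti : Antitone a := by
    refine antitone_nat_of_succ_le fun N => ?_
    obtain ⟨T, h1, h2⟩ := ((hT N).and (hT (N + 1))).exists
    rw [← h1, ← h2]
    exact hle N T
  have ha0 : a 0 = 1 := by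
    obtain ⟨T, h1⟩ := (hT 0).exists
    rw [← h1]
    change qv (qdy 1 0) = 1
    simp
  refine ⟨cutA R, a, ⟨hcomp, hT⟩, hanti, ha, fun N => ha0 ▸ hanti (Nat.zero_le N), ?_⟩
  refine tendsto_order.2 ⟨fun b hb => Eventually.of_forall fun N => hb.trans (ha N), fun b hb => ?_⟩
  obtain ⟨q, hq1, hq2⟩ := exists_rat_btwn hb
  obtain ⟨s, hs⟩ := (hS (encode q)).1 ⟨q, rfl, hq1⟩
  have hN : a (Nat.pair (encode q) s + 1) ≤ q := by
    obtain ⟨T, h1, h2⟩ := ((hT (Nat.pair (encode q) s)).and (hT (Nat.pair (encode q) s + 1))).exists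
    rw [← h2, cutA_succ, Nat.unpair_pair]
    simp only
    rw [(ball_iff _ _).2 (fun i _ => hs i), Bool.true_and]
    cases h : qlt (dq (encode q)) (cutA R (Nat.pair (encode q) s) T)
    · have := fun h' => (Bool.eq_false_iff.1 h) ((qlt_iff _ _).2 h')
      rw [qv_dq] at this
      exact not_lt.1 this
    · simp only [cond_true, qv_dq, le_refl]
  exact eventually_atTop.2 ⟨_, fun N h => lt_of_le_of_lt ((hanti h).trans hN) hq2⟩

theorem right_of_rep {α : ℝ} {A : ℕ → ℕ → Q3} {a : ℕ → ℝ} (h : Rep A a) (ha : ∀ N, α ≤ a N)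
    (hl : Tendsto a atTop (𝓝 α)) : RightCeIn (iterJump 1) α := by
  refine CeIn_iff_Sig2.2 ⟨fun m s t => isq m &&
    (nlt t s.unpair.2 || qlt (A s.unpair.1 t) (dq m)), ?_, fun m => ?_⟩
  · have hA := h.1
    fun_prop
  · constructor
    · rintro ⟨q, rfl, hq⟩
      obtain ⟨N, hN⟩ := (hl.eventually (gt_mem_nhds hq)).exists
      obtain ⟨T, hT⟩ := eventually_atTop.1 (h.2 N)
      refine ⟨Nat.pair N T, fun t => ?_⟩
      rw [Bool.and_eq_true, Bool.or_eq_true, Nat.unpair_pair, nlt_iff, qlt_iff, qv_dq]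
      refine ⟨(isq_iff _).2 ⟨q, rfl⟩, ?_⟩
      rcases lt_or_ge t T with h | h
      · exact Or.inl h
      · exact Or.inr (by simp only [hT t h]; exact hN)
    · rintro ⟨s, hs⟩
      simp only [Bool.and_eq_true, Bool.or_eq_true, nlt_iff, qlt_iff] at hs
      obtain ⟨q, rfl⟩ := (isq_iff _).1 (hs 0).1
      refine ⟨q, rfl, ?_⟩
      obtain ⟨T, hT⟩ := eventually_atTop.1 (h.2 s.unpair.1)
      have := (hs (max T s.unpair.2)).2
      rw [hT _ (le_max_left _ _), qv_dq] at this
      rcases this with h | h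
      · exact absurd h (not_lt.2 (le_max_right _ _))
      · exact lt_of_le_of_lt (ha _) h

end RandProb


open scoped Classical
open MeasureTheory

namespace RandProb

open Encodable Filter Topology

/-! ### Measure on Cantor space -/

theorem initSeg_succ (X : Cantor) (n : ℕ) : initSeg X (n + 1) = initSeg X n ++ [X n] := by
  simp [initSeg, List.range_succ]

@[simp] theorem initSeg_length (X : Cantor) (n : ℕ) : (initSeg X n).length = n := by
  simp [initSeg]

theorem initSeg_take (X : Cantor) {m n : ℕ} (h : m ≤ n) : (initSeg X n).take m = initSeg X m := by
  simp [initSeg, ← List.map_take, List.take_range, h]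

theorem initSeg_isPre (X : Cantor) {m n : ℕ} (h : m ≤ n) : initSeg X m <+: initSeg X n := by
  rw [← initSeg_take X h]; exact List.take_prefix _ _

/-- The shift. -/
def shift (d : ℕ) (X : Cantor) : Cantor := fun n => X (n + d)

theorem initSeg_drop (X : Cantor) (d n : ℕ) : (initSeg X n).drop d = initSeg (shift d X) (n - d) := by
  refine List.ext_getElem (by simp) fun i h1 h2 => ?_
  simp [initSeg, shift, add_comm]

theorem shift_prepend (π : List Bool) (Y : Cantor) : shift π.length (prepend π Y) = Y := by
  funext n
  simp [shift, prepend]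

theorem extends_prepend (π : List Bool) (Y : Cantor) : Extends (prepend π Y) π := by
  unfold Extends
  refine List.ext_getElem (by simp) fun i h1 h2 => ?_
  simp [initSeg, prepend, h2]

theorem prepend_shift {π : List Bool} {X : Cantor} (h : Extends X π) :
    prepend π (shift π.length X) = X := by
  funext n
  unfold prepend shift
  split_ifs with hn
  · have : π[n]? = (initSeg X π.length)[n]? := by rw [h]
    rw [List.getD_eq_getElem?_getD, this]
    simp [initSeg, hn]
  · congr 1; omega

theorem measurableSet_initSeg (T : ℕ) (P : List Bool → Prop) :
    MeasurableSet {X : Cantor | P (initSeg X T)} := by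
  induction T generalizing P with
  | zero =>
    have : {X : Cantor | P (initSeg X 0)} = {_X : Cantor | P []} := rfl
    rw [this]
    exact MeasurableSet.const _
  | succ T ih =>
    have hm : Measurable (fun X : Cantor => X T) := measurable_pi_apply T
    have hb : MeasurableSet {X : Cantor | X T = true} :=
      measurableSet_eq_fun hm measurable_const
    have : {X : Cantor | P (initSeg X (T + 1))} =
        ({X : Cantor | X T = true} ∩ {X | P (initSeg X T ++ [true])}) ∪
        ({X : Cantor | X T = true}ᶜ ∩ {X | P (initSeg X T ++ [false])}) := by
      ext X
      simp only [initSeg_succ, Set.mem_union, Set.mem_inter_iff, Set.mem_compl_iff]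
      change P (initSeg X T ++ [X T]) ↔ (X T = true ∧ P (initSeg X T ++ [true])) ∨
        (¬ X T = true ∧ P (initSeg X T ++ [false]))
      cases X T <;> simp
    rw [this]
    exact (hb.inter (ih fun τ => P (τ ++ [true]))).union
      (hb.compl.inter (ih fun τ => P (τ ++ [false])))

theorem measurable_digits : Measurable digits := by
  refine measurable_pi_iff.2 fun n => ?_
  have h1 : Measurable (fun x : ℝ => ⌊x * 2 ^ (n + 1)⌋) :=
    Int.measurable_floor.comp (measurable_id.mul_const _)
  exact (Measurable.of_discrete (f := fun z : ℤ => decide (z % 2 = 1))).comp h1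

theorem mu_eq {S : Set Cantor} (hS : MeasurableSet S) :
    mu S = volume (digits ⁻¹' S ∩ Set.Ico (0 : ℝ) 1) := by
  rw [mu, Measure.map_apply measurable_digits hS, Measure.restrict_apply (measurable_digits hS)]

instance : IsProbabilityMeasure mu := by
  refine ⟨?_⟩
  rw [mu_eq MeasurableSet.univ]
  simp

theorem measurable_shift (d : ℕ) : Measurable (shift d) :=
  measurable_pi_iff.2 fun n => measurable_pi_apply (n + d)

/-- The value of a binary string. -/
def sval (τ : List Bool) : ℕ := τ.foldl (fun a b => 2 * a + bif b then 1 else 0) 0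

@[fun_prop] theorem cmp_sval {α : Type*} [Primcodable α] {f : α → List Bool} (hf : Computable f) :
    Computable (fun x => sval (f x)) := by
  unfold sval
  exact cmp_foldl hf (by fun_prop) (by fun_prop)

theorem sval_append (τ : List Bool) (b : Bool) : sval (τ ++ [b]) = 2 * sval τ + bif b then 1 else 0 := by
  simp [sval]

theorem sval_lt (τ : List Bool) : sval τ < 2 ^ τ.length := by
  induction τ using List.reverseRecOn with
  | nil => simp [sval]
  | append_singleton l b ih =>
    rw [sval_append, List.length_append, pow_add]
    cases b <;> simp <;> omega

theorem sval_inj {σ τ : List Bool} (hl : σ.length = τ.length) (h : sval σ = sval τ) : σ = τ := by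
  induction σ using List.reverseRecOn generalizing τ with
  | nil =>
    simp only [List.length_nil] at hl
    exact (List.length_eq_zero_iff.1 hl.symm).symm
  | append_singleton l b ih =>
    rcases List.eq_nil_or_concat τ with rfl | ⟨l', b', rfl⟩
    · simp at hl
    · rw [List.concat_eq_append] at h hl ⊢
      simp only [List.length_append, List.length_singleton, Nat.add_right_cancel_iff] at hl
      rw [sval_append, sval_append] at h
      have : sval l = sval l' ∧ b = b' := by
        cases b <;> cases b' <;> simp at h ⊢ <;> omega
      rw [ih hl this.1, this.2]

theorem digits_eq {x : ℝ} (hx : 0 ≤ x) (n : ℕ) :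
    digits x n = decide (⌊x * 2 ^ (n + 1)⌋₊ % 2 = 1) := by
  have h : 0 ≤ x * 2 ^ (n + 1) := by positivity
  unfold digits
  rw [← Int.natCast_floor_eq_floor h]
  congr 1
  apply propext
  omega

theorem floor_half {x : ℝ} (n k : ℕ) : ⌊x * 2 ^ (n + k)⌋₊ / 2 ^ k = ⌊x * 2 ^ n⌋₊ := by
  rw [show ((2 : ℕ) ^ k) = ((2 ^ k : ℕ)) from rfl, ← Nat.floor_div_natCast]
  congr 1
  push_cast
  rw [pow_add]
  field_simp

theorem sval_initSeg {x : ℝ} (hx : 0 ≤ x) (h1 : x < 1) (n : ℕ) :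
    sval (initSeg (digits x) n) = ⌊x * 2 ^ n⌋₊ := by
  induction n with
  | zero =>
    rw [pow_zero, mul_one, Nat.floor_eq_zero.2 h1]; rfl
  | succ n ih =>
    rw [initSeg_succ, sval_append, ih, digits_eq hx, ← floor_half n 1, pow_one]
    generalize ⌊x * 2 ^ (n + 1)⌋₊ = m
    by_cases h : m % 2 = 1
    · simp [h]; omega
    · simp [h]; omega

/-- The `j`-th string of length `T`. -/
def str (T j : ℕ) : List Bool := (List.range T).map (fun i => neq (j / 2 ^ (T - 1 - i) % 2) 1)

@[fun_prop] theorem cmp_str {α : Type*} [Primcodable α] {f g : α → ℕ} (hf : Computable f)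
    (hg : Computable g) : Computable (fun x => str (f x) (g x)) := by
  unfold str
  exact cmp_listRangeMap hf (by fun_prop)

theorem initSeg_digits {x : ℝ} (hx : 0 ≤ x) (T : ℕ) :
    initSeg (digits x) T = str T ⌊x * 2 ^ T⌋₊ := by
  unfold initSeg str
  refine List.map_congr_left fun i hi => ?_
  have hi := List.mem_range.1 hi
  rw [digits_eq hx, neq]
  have := floor_half (x := x) (i + 1) (T - 1 - i)
  rw [show i + 1 + (T - 1 - i) = T by omega] at this
  rw [this]

theorem extends_digits_iff {x : ℝ} (hx : 0 ≤ x) (h1 : x < 1) (π : List Bool) :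
    Extends (digits x) π ↔ ⌊x * 2 ^ π.length⌋₊ = sval π := by
  rw [← sval_initSeg hx h1]
  exact ⟨fun h => by rw [h], fun h => sval_inj (by simp) h⟩

theorem mem_floor_iff {x : ℝ} (hx : 0 ≤ x) (T j : ℕ) :
    ⌊x * 2 ^ T⌋₊ = j ↔ (j : ℝ) / 2 ^ T ≤ x ∧ x < ((j : ℝ) + 1) / 2 ^ T := by
  rw [Nat.floor_eq_iff (by positivity), div_le_iff₀ (by positivity), lt_div_iff₀ (by positivity)]

theorem mu_initSeg (T : ℕ) (P : List Bool → Prop) :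
    mu {X | P (initSeg X T)} =
      ENNReal.ofReal ((((Finset.range (2 ^ T)).filter (fun j => P (str T j))).card : ℝ) / 2 ^ T) := by
  rw [mu_eq (measurableSet_initSeg T P)]
  have hset : digits ⁻¹' {X | P (initSeg X T)} ∩ Set.Ico (0 : ℝ) 1 =
      ⋃ j ∈ (Finset.range (2 ^ T)).filter (fun j => P (str T j)),
        Set.Ico ((j : ℝ) / 2 ^ T) (((j : ℝ) + 1) / 2 ^ T) := by
    ext x
    simp only [Set.mem_inter_iff, Set.mem_preimage, Set.mem_iUnion, Finset.mem_filter,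
      Finset.mem_range, Set.mem_Ico, exists_prop]
    constructor
    · rintro ⟨hP, h0, h1⟩
      refine ⟨⌊x * 2 ^ T⌋₊, ⟨?_, ?_⟩, (mem_floor_iff h0 T _).1 rfl⟩
      · rw [Nat.floor_lt (by positivity)]
        push_cast
        have : (0 : ℝ) < 2 ^ T := by positivity
        nlinarith
      · rw [← initSeg_digits h0]; exact hP
    · rintro ⟨j, ⟨hj, hP⟩, h⟩
      have h0 : 0 ≤ x := le_trans (by positivity) h.1
      refine ⟨?_, h0, lt_of_lt_of_le h.2 ?_⟩
      · change P _
        rw [initSeg_digits h0, (mem_floor_iff h0 T j).2 h]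
        exact hP
      · rw [div_le_one (by positivity)]
        exact_mod_cast hj
  rw [hset, measure_biUnion_finset]
  · have : ∀ j : ℕ, volume (Set.Ico ((j : ℝ) / 2 ^ T) (((j : ℝ) + 1) / 2 ^ T)) =
        ENNReal.ofReal (1 / 2 ^ T) := by
      intro j
      rw [Real.volume_Ico]
      congr 1
      ring
    simp only [this, Finset.sum_const, nsmul_eq_mul]
    rw [← ENNReal.ofReal_natCast, ← ENNReal.ofReal_mul (by positivity)]
    congr 1
    ring
  · intro i _ j _ hij
    refine Set.disjoint_left.2 fun x hi hj => hij ?_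
    have h0 : 0 ≤ x := le_trans (by positivity) hi.1
    rw [← (mem_floor_iff h0 T i).2 hi, ← (mem_floor_iff h0 T j).2 hj]
  · intro j _
    exact measurableSet_Ico

theorem shift_digits {x : ℝ} (d : ℕ) (j : ℤ) :
    shift d (digits x) = digits (x * 2 ^ d - j) := by
  funext n
  unfold shift digits
  have : (x * 2 ^ d - j) * 2 ^ (n + 1) = x * 2 ^ (n + d + 1) - ((j * 2 ^ (n + 1) : ℤ) : ℝ) := by
    push_cast; ring
  rw [this, Int.floor_sub_intCast]
  congr 1
  apply propext
  have : j * 2 ^ (n + 1) = 2 * (j * 2 ^ n) := by ring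
  rw [this]
  omega

theorem mu_prepended (π : List Bool) {S : Set Cantor} (hS : MeasurableSet S) :
    mu {X | Extends X π ∧ shift π.length X ∈ S} = ENNReal.ofReal ((2 : ℝ)⁻¹ ^ π.length) * mu S := by
  have hm : MeasurableSet {X | Extends X π ∧ shift π.length X ∈ S} :=
    (measurableSet_initSeg π.length (fun τ => τ = π)).inter (measurable_shift _ hS)
  rw [mu_eq hm, mu_eq hS]
  have hset : digits ⁻¹' {X | Extends X π ∧ shift π.length X ∈ S} ∩ Set.Ico (0 : ℝ) 1 =
      (fun x => x * 2 ^ π.length) ⁻¹' ((fun x => x - (sval π : ℝ)) ⁻¹'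
        (digits ⁻¹' S ∩ Set.Ico (0 : ℝ) 1)) := by
    have hp : (0 : ℝ) < 2 ^ π.length := by positivity
    have hv : (sval π : ℝ) + 1 ≤ 2 ^ π.length := by exact_mod_cast sval_lt π
    ext x
    simp only [Set.mem_inter_iff, Set.mem_preimage, Set.mem_Ico]
    change ((Extends (digits x) π ∧ shift π.length (digits x) ∈ S) ∧ 0 ≤ x ∧ x < 1) ↔ _
    rw [shift_digits π.length (sval π : ℤ)]
    constructor
    · rintro ⟨⟨h1, h2⟩, h3, h4⟩
      rw [extends_digits_iff h3 h4, Nat.floor_eq_iff (by positivity)] at h1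
      exact ⟨by simpa using h2, by linarith, by linarith⟩
    · rintro ⟨h1, h2, h3⟩
      have h0 : 0 ≤ x * 2 ^ π.length := by
        have : (0 : ℝ) ≤ sval π := by positivity
        linarith
      have hx0 : 0 ≤ x := nonneg_of_mul_nonneg_left h0 hp
      have hx1 : x < 1 := by
        by_contra hc
        nlinarith
      refine ⟨⟨?_, by simpa using h1⟩, hx0, hx1⟩
      rw [extends_digits_iff hx0 hx1, Nat.floor_eq_iff h0]
      exact ⟨by linarith, by linarith⟩
  rw [hset, Real.volume_preimage_mul_right (by positivity)]
  simp only [sub_eq_add_neg]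
  rw [measure_preimage_add_right, abs_of_pos (by positivity), inv_pow]

end RandProb


open scoped Classical
open MeasureTheory

namespace RandProb

open Encodable Filter Topology

/-! ### Initial segments of the unit interval as classes -/

theorem muR_of_cut {S : Set Cantor} (hS : MeasurableSet S) {β : ℝ} (h0 : 0 ≤ β) (h1 : β ≤ 1)
    (hlt : ∀ y, 0 ≤ y → y < β → digits y ∈ S)
    (hle : ∀ y, 0 ≤ y → y < 1 → digits y ∈ S → y ≤ β) : muR S = β := by
  have : mu S = ENNReal.ofReal β := by
    rw [mu_eq hS]
    apply le_antisymm
    · calc volume (digits ⁻¹' S ∩ Set.Ico (0 : ℝ) 1) ≤ volume (Set.Icc 0 β) :=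
            measure_mono fun y hy => ⟨hy.2.1, hle y hy.2.1 hy.2.2 hy.1⟩
        _ = ENNReal.ofReal β := by rw [Real.volume_Icc, sub_zero]
    · calc ENNReal.ofReal β = volume (Set.Ico 0 β) := by rw [Real.volume_Ico, sub_zero]
        _ ≤ volume (digits ⁻¹' S ∩ Set.Ico (0 : ℝ) 1) := measure_mono fun y hy =>
           ⟨hlt y hy.1 hy.2, hy.1, lt_of_lt_of_le hy.2 h1⟩
  rw [muR, this, ENNReal.toReal_ofReal h0]

/-- The basic test whether the string `τ` is, up to precision `x`, below the stage `t` value. -/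
def lowT (B : ℕ → ℕ → Q3) (τ : List Bool) (x t : ℕ) : Bool :=
  nle x t && !(qlt (B x.unpair.1 t) (qdy (sval (τ.take x)) x))

/-- Halting test on input `n`. -/
def lowOK (B : ℕ → ℕ → Q3) (τ : List Bool) (n : ℕ) : Bool :=
  ball (n + 1) (fun x => nle x τ.length && bex (τ.length + 1) (fun t => lowT B τ x t))

/-- The class of sequences below the limit. -/
def lowC (B : ℕ → ℕ → Q3) : Set Cantor :=
  {X | ∀ x, ∃ t, lowT B (initSeg X x) x t = true}

theorem lowT_initSeg (B : ℕ → ℕ → Q3) (X : Cantor) {x T : ℕ} (h : x ≤ T) (t : ℕ) :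
    lowT B (initSeg X T) x t = lowT B (initSeg X x) x t := by
  unfold lowT
  rw [initSeg_take X h, initSeg_take X le_rfl]

theorem lowOK_iff (B : ℕ → ℕ → Q3) (X : Cantor) (n : ℕ) :
    (∃ T, lowOK B (initSeg X T) n = true) ↔ ∀ x ≤ n, ∃ t, lowT B (initSeg X x) x t = true := by
  unfold lowOK
  simp only [ball_iff, Bool.and_eq_true, nle_iff, bex_iff, initSeg_length, Nat.lt_succ_iff]
  constructor
  · rintro ⟨T, h⟩ x hx
    obtain ⟨hxT, t, ht, h2⟩ := h x hx
    exact ⟨t, by rwa [lowT_initSeg B X hxT] at h2⟩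
  · intro h
    choose! f hf using h
    refine ⟨n + ∑ x ∈ Finset.range (n + 1), f x, fun x hx => ⟨by omega, f x, ?_, ?_⟩⟩
    · have := Finset.single_le_sum (s := Finset.range (n + 1)) (f := f) (fun i _ => Nat.zero_le _)
        (Finset.mem_range.2 (Nat.lt_succ_iff.2 hx))
      omega
    · rw [lowT_initSeg B X (by omega)]
      exact hf x hx

theorem lowC_iff_infinite (B : ℕ → ℕ → Q3) (X : Cantor) :
    X ∈ lowC B ↔ {n | ∃ T, lowOK B (initSeg X T) n = true}.Infinite := by
  simp only [lowOK_iff]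
  constructor
  · intro h
    have : {n : ℕ | ∀ x ≤ n, ∃ t, lowT B (initSeg X x) x t = true} = Set.univ :=
      Set.eq_univ_of_forall fun n x _ => h x
    rw [this]
    exact Set.infinite_univ
  · intro h x
    obtain ⟨n, hn, hx⟩ := h.exists_gt x
    exact hn x hx.le

theorem measurableSet_lowC (B : ℕ → ℕ → Q3) : MeasurableSet (lowC B) := by
  have : lowC B = ⋂ x, ⋃ t, {X | lowT B (initSeg X x) x t = true} := by
    ext X
    simp only [Set.mem_iInter, Set.mem_iUnion]
    exact Iff.rfl
  rw [this]
  exact MeasurableSet.iInter fun x => MeasurableSet.iUnion fun t =>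
    measurableSet_initSeg x (fun τ => lowT B τ x t = true)

theorem lowC_iff {B : ℕ → ℕ → Q3} {b : ℕ → ℝ} {β : ℝ}
    (hB : ∀ N, ∀ᶠ T in atTop, qv (B N T) = b N) (hβ : ∀ N, β ≤ b N)
    (hlim : Tendsto b atTop (𝓝 β)) {y : ℝ} (h0 : 0 ≤ y) (h1 : y < 1) :
    digits y ∈ lowC B ↔ y ≤ β := by
  have key : ∀ x t, lowT B (initSeg (digits y) x) x t = true ↔
      x ≤ t ∧ (⌊y * 2 ^ x⌋₊ : ℝ) / 2 ^ x ≤ qv (B x.unpair.1 t) := by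
    intro x t
    unfold lowT
    rw [Bool.and_eq_true, nle_iff, initSeg_take _ le_rfl, sval_initSeg h0 h1, Bool.not_eq_true',
      Bool.eq_false_iff, ne_eq, qlt_iff, qv_dy, not_lt]
  change (∀ x, ∃ t, lowT B (initSeg (digits y) x) x t = true) ↔ _
  simp only [key]
  constructor
  · intro h
    by_contra hc
    push Not at hc
    obtain ⟨N, hN⟩ := (hlim.eventually_lt_const hc).exists
    obtain ⟨T0, hT0⟩ := eventually_atTop.1 (hB N)
    obtain ⟨M0, hM0⟩ := exists_pow_lt_of_lt_one (sub_pos.2 hN) (by norm_num : (2 : ℝ)⁻¹ < 1)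
    obtain ⟨t, ht, hle⟩ := h (Nat.pair N (max M0 T0))
    have hx : max M0 T0 ≤ Nat.pair N (max M0 T0) := Nat.right_le_pair _ _
    rw [Nat.unpair_pair, hT0 t (by omega)] at hle
    generalize hxx : Nat.pair N (max M0 T0) = x at *
    have h3 : y * 2 ^ x < ⌊y * 2 ^ x⌋₊ + 1 := Nat.lt_floor_add_one _
    have hp : (0 : ℝ) < 2 ^ x := by positivity
    have h4 : (2 : ℝ)⁻¹ ^ x ≤ 2⁻¹ ^ M0 :=
      pow_le_pow_of_le_one (by norm_num) (by norm_num) (by omega)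
    have h5 : (2 : ℝ)⁻¹ ^ x * 2 ^ x = 1 := by rw [← mul_pow]; norm_num
    rw [div_le_iff₀ hp] at hle
    nlinarith
  · intro h x
    obtain ⟨T0, hT0⟩ := eventually_atTop.1 (hB x.unpair.1)
    refine ⟨max x T0, le_max_left _ _, ?_⟩
    rw [hT0 _ (le_max_right _ _)]
    refine le_trans ?_ (h.trans (hβ _))
    rw [div_le_iff₀ (by positivity)]
    exact Nat.floor_le (by positivity)

/-! ### Approximating the measure of a `Π₂` class -/

/-- Count of strings. -/
def clsCnt (P : ℕ → ℕ → List Bool → Bool) (e N T : ℕ) : ℕ :=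
  bcount (2 ^ T) (fun j => P e N (str T j))

/-- The measure, rounded up. -/
def clsG (P : ℕ → ℕ → List Bool → Bool) (e N T : ℕ) : Q3 :=
  qdy ((2 ^ N * clsCnt P e N T + 2 ^ T - 1) / 2 ^ T) N

/-- The class. -/
def cls (P : ℕ → ℕ → List Bool → Bool) (e : ℕ) : Set Cantor :=
  {X | ∀ k, ∃ T, P e k (initSeg X T) = true}

theorem clsG_computable {P : ℕ → ℕ → List Bool → Bool}
    (hP : Computable (fun x : ℕ × ℕ × List Bool => P x.1 x.2.1 x.2.2)) :
    Computable (fun x : ℕ × ℕ × ℕ => clsG P x.1 x.2.1 x.2.2) := by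
  have : Computable (fun x : ℕ × ℕ × ℕ => clsCnt P x.1 x.2.1 x.2.2) := by
    unfold clsCnt
    fun_prop
  unfold clsG
  fun_prop

theorem measurableSet_cls (P : ℕ → ℕ → List Bool → Bool) (e : ℕ) : MeasurableSet (cls P e) := by
  have : cls P e = ⋂ k, ⋃ T, {X | P e k (initSeg X T) = true} := by
    ext X
    simp only [Set.mem_iInter, Set.mem_iUnion]
    exact Iff.rfl
  rw [this]
  exact MeasurableSet.iInter fun k => MeasurableSet.iUnion fun t =>
    measurableSet_initSeg t (fun τ => P e k τ = true)

theorem cls_approx {P : ℕ → ℕ → List Bool → Bool}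
    (hmono : ∀ e k τ τ', τ <+: τ' → P e k τ = true → P e k τ' = true)
    (hanti : ∀ e k τ, P e (k + 1) τ = true → P e k τ = true) (e : ℕ) :
    ∃ a : ℕ → ℝ, (∀ N, ∀ᶠ T in atTop, qv (clsG P e N T) = a N) ∧ Antitone a ∧
      (∀ N, muR (cls P e) ≤ a N) ∧ Tendsto a atTop (𝓝 (muR (cls P e))) := by
  let m : ℕ → ℕ → ℝ := fun N T => muR {X | P e N (initSeg X T) = true}
  let U : ℕ → Set Cantor := fun N => ⋃ T, {X | P e N (initSeg X T) = true}
  have hmU : ∀ N, MeasurableSet (U N) := fun N => MeasurableSet.iUnion fun t =>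
    measurableSet_initSeg t (fun τ => P e N τ = true)
  have hm : ∀ N T, m N T = (clsCnt P e N T : ℝ) / 2 ^ T := by
    intro N T
    change (mu _).toReal = _
    rw [mu_initSeg T (fun τ => P e N τ = true), ENNReal.toReal_ofReal (by positivity), clsCnt,
      bcount_eq]
    congr
  have hmm : ∀ N, Monotone (m N) := by
    intro N T T' h
    refine ENNReal.toReal_mono (measure_ne_top _ _) (measure_mono fun X hX => ?_)
    exact hmono e N _ _ (initSeg_isPre X h) hX
  have hmt : ∀ N, Tendsto (m N) atTop (𝓝 (muR (U N))) := by
    intro N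
    refine (ENNReal.tendsto_toReal (measure_ne_top _ _)).comp (tendsto_measure_iUnion_atTop ?_)
    intro T T' h X hX
    exact hmono e N _ _ (initSeg_isPre X h) hX
  have hUa : Antitone U := by
    refine antitone_nat_of_succ_le fun N X hX => ?_
    obtain ⟨T, hT⟩ := Set.mem_iUnion.1 hX
    exact Set.mem_iUnion.2 ⟨T, hanti e N _ hT⟩
  have hcls : cls P e = ⋂ N, U N := by
    ext X
    simp only [Set.mem_iInter, U, Set.mem_iUnion]
    exact Iff.rfl
  have hUt : Tendsto (fun N => muR (U N)) atTop (𝓝 (muR (cls P e))) := by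
    rw [hcls]
    refine (ENNReal.tendsto_toReal (measure_ne_top _ _)).comp (tendsto_measure_iInter_atTop
      (fun N => (hmU N).nullMeasurableSet) hUa ⟨0, measure_ne_top _ _⟩)
  have hceil : ∀ N T, qv (clsG P e N T) = (⌈2 ^ N * m N T⌉₊ : ℝ) / 2 ^ N := by
    intro N T
    rw [clsG, qv_dy]
    congr 2
    have h2 : 0 < 2 ^ T := by positivity
    refine eq_of_forall_ge_iff fun k => ?_
    rw [Nat.ceil_le, hm, ← mul_div_assoc, div_le_iff₀ (by positivity)]
    have : (2 ^ N * (clsCnt P e N T : ℝ) ≤ k * 2 ^ T) ↔ 2 ^ N * clsCnt P e N T ≤ k * 2 ^ T := by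
      exact_mod_cast Iff.rfl
    rw [this, Nat.div_le_iff_le_mul_add_pred h2]
    rw [mul_comm (2 ^ T) k]
    omega
  have hmle : ∀ N T, m N T ≤ muR (U N) := fun N T => (hmm N).ge_of_tendsto (hmt N) T
  refine ⟨fun N => (⌈2 ^ N * muR (U N)⌉₊ : ℝ) / 2 ^ N, ?_, ?_, ?_, ?_⟩
  · intro N
    have : ∀ᶠ T in atTop, ⌈2 ^ N * m N T⌉₊ = ⌈2 ^ N * muR (U N)⌉₊ := by
      have hub : ∀ T, ⌈2 ^ N * m N T⌉₊ ≤ ⌈2 ^ N * muR (U N)⌉₊ := fun T =>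
        Nat.ceil_mono (mul_le_mul_of_nonneg_left (hmle N T) (by positivity))
      rcases Nat.eq_zero_or_pos ⌈2 ^ N * muR (U N)⌉₊ with h0 | h0
      · exact Eventually.of_forall fun T => by have := hub T; omega
      · have hlt : ((⌈2 ^ N * muR (U N)⌉₊ - 1 : ℕ) : ℝ) < 2 ^ N * muR (U N) := by
          rw [← Nat.lt_ceil]; omega
        filter_upwards [((hmt N).const_mul (2 ^ N)).eventually_const_lt hlt] with T hT
        have := hub T
        rw [← Nat.lt_ceil] at hT
        omega
    filter_upwards [this] with T hT
    rw [hceil, hT]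
  · refine antitone_nat_of_succ_le fun N => ?_
    have h1 : muR (U (N + 1)) ≤ muR (U N) :=
      ENNReal.toReal_mono (measure_ne_top _ _) (measure_mono (hUa (Nat.le_succ N)))
    have h2 : ⌈2 ^ (N + 1) * muR (U (N + 1))⌉₊ ≤ 2 * ⌈2 ^ N * muR (U N)⌉₊ := by
      rw [Nat.ceil_le]
      push_cast
      have := Nat.le_ceil (2 ^ N * muR (U N))
      have hp : (0 : ℝ) < 2 ^ N := by positivity
      rw [pow_succ]
      nlinarith
    rw [div_le_div_iff₀ (by positivity) (by positivity), pow_succ]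
    have h3 : (⌈2 ^ (N + 1) * muR (U (N + 1))⌉₊ : ℝ) ≤ 2 * ⌈2 ^ N * muR (U N)⌉₊ := by
      exact_mod_cast h2
    have hp : (0 : ℝ) < 2 ^ N := by positivity
    rw [pow_succ] at h3
    nlinarith
  · intro N
    have h1 : muR (cls P e) ≤ muR (U N) :=
      ENNReal.toReal_mono (measure_ne_top _ _) (measure_mono (hcls ▸ Set.iInter_subset _ N))
    refine h1.trans ?_
    rw [le_div_iff₀ (by positivity), mul_comm]
    exact Nat.le_ceil _
  · have h2 : Tendsto (fun N => muR (U N) + (2⁻¹ : ℝ) ^ N) atTop (𝓝 (muR (cls P e) + 0)) :=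
      hUt.add (tendsto_pow_atTop_nhds_zero_of_lt_one (by norm_num) (by norm_num))
    rw [add_zero] at h2
    refine tendsto_of_tendsto_of_tendsto_of_le_of_le hUt h2 (fun N => ?_) (fun N => ?_)
    · change muR (U N) ≤ _ / _
      rw [le_div_iff₀ (by positivity), mul_comm]
      exact Nat.le_ceil _
    · change _ / _ ≤ muR (U N) + _
      rw [div_le_iff₀ (by positivity), add_mul, ← mul_pow]
      have := Nat.ceil_lt_add_one (a := 2 ^ N * muR (U N))
        (mul_nonneg (by positivity) ENNReal.toReal_nonneg)
      norm_num
      linarith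

end RandProb


open scoped Classical
open MeasureTheory

namespace RandProb

open Encodable Filter Topology

/-! ### `INF` as an effective class -/

/-- Convert a bit string to a `{0,1}`-valued list. -/
def bits (τ : List Bool) : List ℕ := τ.map (fun b => bif b then 1 else 0)

@[fun_prop] theorem cmp_bits {α : Type*} [Primcodable α] {f : α → List Bool} (hf : Computable f) :
    Computable (fun x => bits (f x)) := by
  have : Primrec (fun b : Bool => bif b then 1 else 0) :=
    Primrec.cond Primrec.id (Primrec.const 1) (Primrec.const 0)
  have h2 : Primrec (fun l : List Bool => bits l) :=
    Primrec.list_map Primrec.id (this.comp Primrec.snd).to₂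
  exact h2.to_comp.comp hf

theorem bits_initSeg (X : Cantor) (i : ℕ) : bits (initSeg X i) = (List.range i).map (oX X) := by
  unfold bits initSeg oX
  rw [List.map_map]
  rfl

/-- The string of `d` ones. -/
def ones (d : ℕ) : List Bool := (List.range d).map (fun _ => true)

@[fun_prop] theorem cmp_ones {α : Type*} [Primcodable α] {f : α → ℕ} (hf : Computable f) :
    Computable (fun x => ones (f x)) := cmp_listRangeMap hf (by fun_prop)

@[simp] theorem ones_length (d : ℕ) : (ones d).length = d := by simp [ones]

/-- The effective version of `INF`. -/
noncomputable def infP (e0 : ℕ) (k : ℕ) (τ : List Bool) : Bool :=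
  bex (τ.length + 1) (fun y => nle y.unpair.2.unpair.1 τ.length && nle k y.unpair.1 &&
    (hstep (bits (τ.take y.unpair.2.unpair.1)) y.unpair.2.unpair.2 e0 y.unpair.1).isSome)

/-- The effective version of `INF` outside of a cylinder. -/
noncomputable def infQ (e0 : ℕ) (π : ℕ → List Bool) (e k : ℕ) (τ : List Bool) : Bool :=
  infP e0 k τ && nle (π e).length τ.length &&
    !(neq (encode (τ.take (π e).length)) (encode (π e)))

theorem infP_computable (e0 : ℕ) : Computable (fun x : ℕ × List Bool => infP e0 x.1 x.2) := by
  unfold infP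
  have : Computable (fun x : (ℕ × List Bool) × ℕ =>
      hstep (bits (x.1.2.take x.2.unpair.2.unpair.1)) x.2.unpair.2.unpair.2 e0 x.2.unpair.1) :=
    hstep_computable (by fun_prop) (by fun_prop) (by fun_prop) (by fun_prop)
  fun_prop

theorem infQ_computable (e0 : ℕ) {π : ℕ → List Bool} (hπ : Computable π) :
    Computable (fun x : ℕ × ℕ × List Bool => infQ e0 π x.1 x.2.1 x.2.2) := by
  unfold infQ
  have := infP_computable e0
  fun_prop

theorem take_of_prefix {τ τ' : List Bool} (h : τ <+: τ') {i : ℕ} (hi : i ≤ τ.length) :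
    τ'.take i = τ.take i := by
  obtain ⟨ρ, rfl⟩ := h
  rw [List.take_append_of_le_length hi]

theorem infP_mono (e0 k : ℕ) {τ τ' : List Bool} (h : τ <+: τ') (hp : infP e0 k τ = true) :
    infP e0 k τ' = true := by
  unfold infP at hp ⊢
  rw [bex_iff] at hp ⊢
  obtain ⟨y, hy, h2⟩ := hp
  have hl := h.length_le
  refine ⟨y, by omega, ?_⟩
  simp only [Bool.and_eq_true, nle_iff] at h2 ⊢
  refine ⟨⟨by omega, h2.1.2⟩, ?_⟩
  rw [take_of_prefix h h2.1.1]
  exact h2.2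

theorem infP_anti (e0 k : ℕ) {τ : List Bool} (hp : infP e0 (k + 1) τ = true) :
    infP e0 k τ = true := by
  unfold infP at hp ⊢
  rw [bex_iff] at hp ⊢
  obtain ⟨y, hy, h2⟩ := hp
  refine ⟨y, hy, ?_⟩
  simp only [Bool.and_eq_true, nle_iff] at h2 ⊢
  exact ⟨⟨h2.1.1, by omega⟩, h2.2⟩

theorem infQ_mono (e0 : ℕ) (π : ℕ → List Bool) (e k : ℕ) (τ τ' : List Bool) (h : τ <+: τ')
    (hp : infQ e0 π e k τ = true) : infQ e0 π e k τ' = true := by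
  have hl := h.length_le
  unfold infQ at hp ⊢
  simp only [Bool.and_eq_true, nle_iff] at hp ⊢
  refine ⟨⟨infP_mono e0 k h hp.1.1, by omega⟩, ?_⟩
  rw [take_of_prefix h hp.1.2]
  exact hp.2

theorem infQ_anti (e0 : ℕ) (π : ℕ → List Bool) (e k : ℕ) (τ : List Bool)
    (hp : infQ e0 π e (k + 1) τ = true) : infQ e0 π e k τ = true := by
  unfold infQ at hp ⊢
  simp only [Bool.and_eq_true] at hp ⊢
  exact ⟨⟨infP_anti e0 k hp.1.1, hp.1.2⟩, hp.2⟩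

theorem infP_iff (u : CodeO) (X : Cantor) (k : ℕ) :
    (∃ T, infP u.encode k (initSeg X T) = true) ↔ ∃ n, k ≤ n ∧ n ∈ domSet u X := by
  unfold infP
  simp only [bex_iff, Bool.and_eq_true, nle_iff, initSeg_length]
  constructor
  · rintro ⟨T, y, hy, ⟨h1, h2⟩, h3⟩
    refine ⟨y.unpair.1, h2, ?_⟩
    rw [initSeg_take X h1, bits_initSeg] at h3
    obtain ⟨m, hm⟩ := Option.isSome_iff_exists.1 h3
    exact Part.dom_iff_mem.2 ⟨m, hstep_sound hm⟩
  · rintro ⟨n, hn, hd⟩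
    obtain ⟨m, hm⟩ := Part.dom_iff_mem.1 hd
    obtain ⟨i, j, hij⟩ := hstep_complete hm
    refine ⟨Nat.pair n (Nat.pair i j), Nat.pair n (Nat.pair i j), by omega, ?_⟩
    have h1 := Nat.left_le_pair i j
    have h2 := Nat.right_le_pair n (Nat.pair i j)
    simp only [Nat.unpair_pair]
    refine ⟨⟨by omega, hn⟩, ?_⟩
    rw [initSeg_take X (by omega), bits_initSeg]
    rw [Option.isSome_iff_exists]
    exact ⟨m, hij⟩

theorem mem_INF_iff (u : CodeO) (X : Cantor) :
    X ∈ INF u ↔ ∀ k, ∃ T, infP u.encode k (initSeg X T) = true := by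
  simp only [infP_iff]
  constructor
  · intro h k
    obtain ⟨n, hn, hk⟩ := Set.Infinite.exists_gt (s := domSet u X) h k
    exact ⟨n, hk.le, hn⟩
  · intro h
    change (domSet u X).Infinite
    refine Set.infinite_of_not_bddAbove ?_
    rintro ⟨M, hM⟩
    obtain ⟨n, hn, hd⟩ := h (M + 1)
    have := hM hd
    omega

theorem INF_eq_cls (u : CodeO) : INF u = cls (fun _ => infP u.encode) 0 := by
  ext X
  exact mem_INF_iff u X

theorem measurableSet_INF (u : CodeO) : MeasurableSet (INF u) := by
  rw [INF_eq_cls]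
  exact measurableSet_cls _ _

theorem INF_diff_eq_cls (u : CodeO) (π : ℕ → List Bool) (e : ℕ) :
    INF u \ {X | Extends X (π e)} = cls (infQ u.encode π) e := by
  ext X
  change (X ∈ INF u ∧ ¬ Extends X (π e)) ↔ ∀ k, ∃ T, infQ u.encode π e k (initSeg X T) = true
  rw [mem_INF_iff]
  unfold infQ
  simp only [Bool.and_eq_true, nle_iff, initSeg_length, Bool.not_eq_true', Bool.eq_false_iff, ne_eq,
    neq_iff, encode_inj]
  constructor
  · rintro ⟨h1, h2⟩ k
    obtain ⟨T, hT⟩ := h1 k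
    refine ⟨max T (π e).length, ⟨infP_mono _ _ (initSeg_isPre X (le_max_left _ _)) hT,
      le_max_right _ _⟩, ?_⟩
    rw [initSeg_take X (le_max_right _ _)]
    exact h2
  · intro h
    refine ⟨fun k => ?_, ?_⟩
    · obtain ⟨T, hT⟩ := h k
      exact ⟨T, hT.1.1⟩
    · obtain ⟨T, hT⟩ := h 0
      rw [initSeg_take X hT.1.2] at hT
      exact hT.2

theorem clsG_computable_fix {P : ℕ → ℕ → List Bool → Bool}
    (hP : Computable (fun x : ℕ × ℕ × List Bool => P x.1 x.2.1 x.2.2)) (e : ℕ) :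
    Computable (fun x : ℕ × ℕ => clsG P e x.1 x.2) := by
  have h := clsG_computable hP
  generalize clsG P = F at *
  fun_prop

/-- Approximations to `μ(INF u)`. -/
theorem rep_INF (u : CodeO) : ∃ A a, Rep A a ∧ Antitone a ∧ (∀ N, muR (INF u) ≤ a N) ∧
    Tendsto a atTop (𝓝 (muR (INF u))) := by
  obtain ⟨a, h1, h2, h3, h4⟩ := cls_approx (P := fun _ => infP u.encode)
    (fun _ k _ _ h hp => infP_mono _ k h hp) (fun _ k _ hp => infP_anti _ k hp) 0
  rw [← INF_eq_cls] at h3 h4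
  refine ⟨clsG (fun _ => infP u.encode) 0, a, ⟨?_, h1⟩, h2, h3, h4⟩
  refine clsG_computable_fix ?_ 0
  have h := infP_computable u.encode
  exact h.comp (f := fun x : ℕ × List Bool => infP u.encode x.1 x.2)
    (g := fun x : ℕ × ℕ × List Bool => x.2) (by fun_prop)

theorem right_INF (u : CodeO) : RightCeIn (iterJump 1) (muR (INF u)) := by
  obtain ⟨A, a, h1, _, h3, h4⟩ := rep_INF u
  exact right_of_rep h1 h3 h4

/-! ### Leading ones -/

/-- The number of leading ones of a string. -/
def lead (τ : List Bool) : ℕ :=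
  bcount τ.length (fun i => ball (i + 1) (fun j => (τ[j]?).getD false))

@[fun_prop] theorem cmp_lead {α : Type*} [Primcodable α] {f : α → List Bool} (hf : Computable f) :
    Computable (fun x => lead (f x)) := by
  have : Computable lead := by
    unfold lead
    fun_prop
  exact this.comp hf

theorem lead_initSeg {X : Cantor} {e : ℕ} (h1 : ∀ j < e, X j = true) (h2 : X e = false) (T : ℕ) :
    lead (initSeg X T) = min T e := by
  unfold lead
  rw [bcount_eq, initSeg_length]
  have : (Finset.range T).filter (fun i => ball (i + 1)
      (fun j => ((initSeg X T)[j]?).getD false) = true) = Finset.range (min T e) := by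
    ext i
    simp only [Finset.mem_filter, Finset.mem_range, ball_iff, lt_min_iff]
    refine and_congr_right fun hi => ?_
    have hX : ∀ j < i + 1, ((initSeg X T)[j]?).getD false = X j := by
      intro j hj
      have : j < T := by omega
      simp [initSeg, this]
    constructor
    · intro h
      by_contra hc
      have := h e (by omega)
      rw [hX e (by omega), h2] at this
      exact absurd this (by simp)
    · intro h j hj
      rw [hX j hj]
      exact h1 j (by omega)
  rw [this, Finset.card_range]

theorem prepend_ones_lt (e : ℕ) (Y : Cantor) {j : ℕ} (h : j < e) :
    prepend (ones e ++ [false]) Y j = true := by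
  have h1 : j < e + 1 := by omega
  simp [prepend, ones, h1, List.getElem?_append, h]

theorem prepend_ones_eq (e : ℕ) (Y : Cantor) :
    prepend (ones e ++ [false]) Y e = false := by
  simp [prepend, ones, List.getElem?_append]

theorem lead_prepend (e : ℕ) (Y : Cantor) (T : ℕ) :
    lead (initSeg (prepend (ones e ++ [false]) Y) T) = min T e :=
  lead_initSeg (fun _ h => prepend_ones_lt e Y h) (prepend_ones_eq e Y) T

theorem drop_prepend (e : ℕ) (Y : Cantor) (T : ℕ) :
    (initSeg (prepend (ones e ++ [false]) Y) T).drop (e + 1) = initSeg Y (T - (e + 1)) := by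
  rw [initSeg_drop]
  have := shift_prepend (ones e ++ [false]) Y
  rw [List.length_append, ones_length, List.length_singleton] at this
  rw [this]

theorem rfindOpt_eq {f : ℕ → Option ℕ} {p : Part ℕ} (hs : ∀ k m, m ∈ f k → m ∈ p)
    (hc : ∀ m ∈ p, ∃ k, m ∈ f k) : Nat.rfindOpt f = p := by
  ext m
  constructor
  · intro h
    obtain ⟨k, hk⟩ := Nat.rfindOpt_spec h
    exact hs k m hk
  · intro h
    obtain ⟨k, hk⟩ := hc m h
    obtain ⟨m', hm'⟩ := Part.dom_iff_mem.1 (Nat.rfindOpt_dom.2 ⟨k, m, hk⟩)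
    obtain ⟨k', hk'⟩ := Nat.rfindOpt_spec hm'
    rwa [Part.mem_unique h (hs k' m' hk')]

theorem prepend_append (σ π : List Bool) (Y : Cantor) :
    prepend (σ ++ π) Y = prepend σ (prepend π Y) := by
  funext n
  unfold prepend
  by_cases h1 : n < σ.length
  · have : n < (σ ++ π).length := by simp; omega
    simp only [h1, this, if_true, List.getD_eq_getElem?_getD, List.getElem?_append]
  · by_cases h2 : n - σ.length < π.length
    · have : n < (σ ++ π).length := by simp; omega
      simp only [h1, h2, this, if_true, if_false, List.getD_eq_getElem?_getD, List.getElem?_append]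
    · have : ¬ n < (σ ++ π).length := by simp; omega
      simp only [h1, h2, this, if_false]
      congr 1
      simp
      omega

end RandProb


open scoped Classical
open MeasureTheory

namespace RandProb

open Encodable Filter Topology

/-! ### Part 1: the infinitude probability is 2-random -/

/-- Current value of the approximation to `2^{-d} β + γ`. -/
def betaZ (d : ℕ) (g r : Q3) : Q3 := qadd (qmul (qdy 1 d) r) g

/-- The non-`Π₁` part of the trigger condition. -/
def betaTrig (m : ℕ) (z : Q3) : Bool :=
  isq m.unpair.1 && isq m.unpair.2 && qlt (dq m.unpair.1) z && qlt z (dq m.unpair.2)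

/-- One step of the construction. -/
def betaS (R : ℕ → ℕ → ℕ → Bool) (d : ℕ) (g : Q3) (T N : ℕ) (r : Q3) : Q3 :=
  bif ball (T + 1) (fun t => R (Nat.pair d N.unpair.1.unpair.1) N.unpair.1.unpair.2 t) &&
      betaTrig N.unpair.1.unpair.1 (betaZ d g r)
  then qmul (qdy (2 ^ d) 0) (qsub (dq N.unpair.1.unpair.1.unpair.1) g) else r

/-- The construction. -/
def betaA (R : ℕ → ℕ → ℕ → Bool) (d : ℕ) (g : ℕ → ℕ → Q3) (N T : ℕ) : Q3 :=
  Nat.rec (qdy 1 0) (fun n r => betaS R d (g n T) T n r) N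

theorem betaA_succ (R : ℕ → ℕ → ℕ → Bool) (d : ℕ) (g : ℕ → ℕ → Q3) (N T : ℕ) :
    betaA R d g (N + 1) T = betaS R d (g N T) T N (betaA R d g N T) := rfl

theorem betaA_computable {R : ℕ → ℕ → ℕ → Bool}
    (hR : Computable (fun x : ℕ × ℕ × ℕ => R x.1 x.2.1 x.2.2)) {d : ℕ → ℕ} (hd : Computable d)
    {g : ℕ → ℕ → ℕ → Q3} (hg : Computable (fun x : ℕ × ℕ × ℕ => g x.1 x.2.1 x.2.2)) :
    Computable (fun x : ℕ × ℕ × ℕ => betaA R (d x.1) (g x.1) x.2.1 x.2.2) := by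
  have hz : Computable (fun x : ℕ × Q3 × Q3 => betaZ x.1 x.2.1 x.2.2) := by
    unfold betaZ
    fun_prop
  have ht : Computable (fun x : ℕ × Q3 => betaTrig x.1 x.2) := by
    unfold betaTrig
    fun_prop
  have hs : Computable (fun x : ℕ × Q3 × ℕ × ℕ × Q3 =>
      betaS R x.1 x.2.1 x.2.2.1 x.2.2.2.1 x.2.2.2.2) := by
    unfold betaS
    fun_prop
  exact cmp_natrec (f := fun x : ℕ × ℕ × ℕ => x.2.1) (g := fun _ => qdy 1 0)
    (h := fun x n r => betaS R (d x.1) (g x.1 n x.2.2) x.2.2 n r) (by fun_prop) (by fun_prop)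
    (by fun_prop)

/-- The limit of the construction. -/
noncomputable def betaR (R : ℕ → ℕ → ℕ → Bool) (d : ℕ) (c : ℕ → ℝ) : ℕ → ℝ
  | 0 => 1
  | N + 1 =>
    if (∀ t, R (Nat.pair d N.unpair.1.unpair.1) N.unpair.1.unpair.2 t = true) ∧
        isq N.unpair.1.unpair.1.unpair.1 = true ∧ isq N.unpair.1.unpair.1.unpair.2 = true ∧
        qv (dq N.unpair.1.unpair.1.unpair.1) < betaR R d c N / 2 ^ d + c N ∧
        betaR R d c N / 2 ^ d + c N < qv (dq N.unpair.1.unpair.1.unpair.2)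
    then 2 ^ d * (qv (dq N.unpair.1.unpair.1.unpair.1) - c N) else betaR R d c N

theorem betaA_eventually (R : ℕ → ℕ → ℕ → Bool) (d : ℕ) {g : ℕ → ℕ → Q3} {c : ℕ → ℝ}
    (hc : ∀ N, ∀ᶠ T in atTop, qv (g N T) = c N) (N : ℕ) :
    ∀ᶠ T in atTop, qv (betaA R d g N T) = betaR R d c N := by
  induction N with
  | zero =>
    refine Eventually.of_forall fun T => ?_
    change qv (qdy 1 0) = 1
    simp
  | succ N ih =>
    filter_upwards [ih, hc N, ball_eventually
      (fun t => R (Nat.pair d N.unpair.1.unpair.1) N.unpair.1.unpair.2 t)] with T h1 h2 h3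
    rw [betaA_succ, betaS, h3, betaR]
    have hz : qv (betaZ d (g N T) (betaA R d g N T)) = betaR R d c N / 2 ^ d + c N := by
      rw [betaZ, qv_add, qv_mul, qv_dy, h1, h2]
      push_cast
      ring
    have hcond : ((decide (∀ t, R (Nat.pair d N.unpair.1.unpair.1) N.unpair.1.unpair.2 t = true) &&
        betaTrig N.unpair.1.unpair.1 (betaZ d (g N T) (betaA R d g N T))) = true) ↔
        ((∀ t, R (Nat.pair d N.unpair.1.unpair.1) N.unpair.1.unpair.2 t = true) ∧
        isq N.unpair.1.unpair.1.unpair.1 = true ∧ isq N.unpair.1.unpair.1.unpair.2 = true ∧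
        qv (dq N.unpair.1.unpair.1.unpair.1) < betaR R d c N / 2 ^ d + c N ∧
        betaR R d c N / 2 ^ d + c N < qv (dq N.unpair.1.unpair.1.unpair.2)) := by
      rw [Bool.and_eq_true, decide_eq_true_iff, betaTrig, Bool.and_eq_true, Bool.and_eq_true,
        Bool.and_eq_true, qlt_iff, qlt_iff, hz]
      exact ⟨fun ⟨h1, ⟨⟨h2, h3⟩, h4⟩, h5⟩ => ⟨h1, h2, h3, h4, h5⟩,
        fun ⟨h1, h2, h3, h4, h5⟩ => ⟨h1, ⟨⟨h2, h3⟩, h4⟩, h5⟩⟩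
    by_cases h : (∀ t, R (Nat.pair d N.unpair.1.unpair.1) N.unpair.1.unpair.2 t = true) ∧
        isq N.unpair.1.unpair.1.unpair.1 = true ∧ isq N.unpair.1.unpair.1.unpair.2 = true ∧
        qv (dq N.unpair.1.unpair.1.unpair.1) < betaR R d c N / 2 ^ d + c N ∧
        betaR R d c N / 2 ^ d + c N < qv (dq N.unpair.1.unpair.1.unpair.2)
    · rw [hcond.2 h, if_pos h, cond_true, qv_mul, qv_sub, qv_dy, h2]
      simp
    · rw [Bool.eq_false_iff.2 (fun h' => h (hcond.1 h')), if_neg h, cond_false, h1]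

theorem betaR_spec {R : ℕ → ℕ → ℕ → Bool} {W : Set ℕ}
    (hW : ∀ m, m ∈ W ↔ ∃ s, ∀ t, R m s t = true) {d : ℕ}
    (hvol : volume (testSet W d) ≤ ENNReal.ofReal ((2 : ℝ)⁻¹ ^ d)) {c : ℕ → ℝ} {γ : ℝ}
    (hca : Antitone c) (hcl : Tendsto c atTop (𝓝 γ)) :
    ∃ β : ℝ, 0 ≤ β ∧ β ≤ 1 ∧ (∀ N, β ≤ betaR R d c N) ∧ Tendsto (betaR R d c) atTop (𝓝 β) ∧
      β / 2 ^ d + γ ∉ testSet W d := by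
  set b := betaR R d c with hb
  have hp : (0 : ℝ) < 2 ^ d := by positivity
  let z : ℕ → ℝ := fun N => b N / 2 ^ d + c N
  -- the two cases of the construction
  have hstep : ∀ N, (b (N + 1) = b N) ∨ (b (N + 1) < b N ∧
      Set.Ioo (b (N + 1) / 2 ^ d + c N) (z N) ⊆ testSet W d) := by
    intro N
    by_cases h : (∀ t, R (Nat.pair d N.unpair.1.unpair.1) N.unpair.1.unpair.2 t = true) ∧
        isq N.unpair.1.unpair.1.unpair.1 = true ∧ isq N.unpair.1.unpair.1.unpair.2 = true ∧
        qv (dq N.unpair.1.unpair.1.unpair.1) < betaR R d c N / 2 ^ d + c N ∧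
        betaR R d c N / 2 ^ d + c N < qv (dq N.unpair.1.unpair.1.unpair.2)
    · right
      have hbs : b (N + 1) = 2 ^ d * (qv (dq N.unpair.1.unpair.1.unpair.1) - c N) := by
        rw [hb, betaR, if_pos h]
      obtain ⟨h1, h2, h3, h4, h5⟩ := h
      obtain ⟨p, hp'⟩ := (isq_iff _).1 h2
      obtain ⟨q, hq'⟩ := (isq_iff _).1 h3
      rw [← hp', qv_dq] at hbs h4
      rw [← hq', qv_dq] at h5
      have hpz : b (N + 1) / 2 ^ d + c N = p := by
        rw [hbs]; field_simp; ring
      refine ⟨?_, ?_⟩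
      · have : b (N + 1) / 2 ^ d < b N / 2 ^ d := by linarith
        exact (div_lt_div_iff_of_pos_right hp).1 this
      · intro x hx
        rw [hpz] at hx
        refine ⟨p, q, (hW _).2 ⟨N.unpair.1.unpair.2, fun t => ?_⟩, hx.1, hx.2.trans h5⟩
        rw [encode_ratpair, hp', hq', Nat.pair_unpair]
        exact h1 t
    · left
      rw [hb, betaR, if_neg h]
  have hba : Antitone b := antitone_nat_of_succ_le fun N => by
    rcases hstep N with h | h
    · exact h.le
    · exact h.1.le
  have hza : Antitone z := fun N M h =>
    add_le_add ((div_le_div_iff_of_pos_right hp).2 (hba h)) (hca h)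
  have hb1 : ∀ N, b N ≤ 1 := fun N => hba (Nat.zero_le N)
  have hinv : ∀ N, ENNReal.ofReal ((1 - b N) / 2 ^ d) ≤ volume (testSet W d ∩ Set.Ioi (z N)) := by
    intro N
    induction N with
    | zero =>
      have : b 0 = 1 := rfl
      rw [this]
      simp
    | succ N ih =>
      rcases hstep N with h | h
      · rw [h]
        exact ih.trans (measure_mono (Set.inter_subset_inter_right _
          (Set.Ioi_subset_Ioi (hza (Nat.le_succ N)))))
      · set y := b (N + 1) / 2 ^ d + c N with hy
        have hyz : z (N + 1) ≤ y := by
          have := hca (Nat.le_succ N)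
          change b (N + 1) / 2 ^ d + c (N + 1) ≤ b (N + 1) / 2 ^ d + c N
          linarith
        have hlt : b (N + 1) / 2 ^ d < b N / 2 ^ d := (div_lt_div_iff_of_pos_right hp).2 h.1
        have hyz2 : z N - y = b N / 2 ^ d - b (N + 1) / 2 ^ d := by
          simp only [z, hy]; ring
        have hsub : (testSet W d ∩ Set.Ioi (z N)) ∪ Set.Ioo y (z N) ⊆
            testSet W d ∩ Set.Ioi (z (N + 1)) := by
          rintro x (hx | hx)
          · exact ⟨hx.1, lt_of_le_of_lt (hza (Nat.le_succ N)) hx.2⟩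
          · exact ⟨h.2 hx, lt_of_le_of_lt hyz hx.1⟩
        have hdisj : Disjoint (testSet W d ∩ Set.Ioi (z N)) (Set.Ioo y (z N)) :=
          Set.disjoint_left.2 fun x hx hx' => lt_asymm hx.2 hx'.2
        refine le_trans ?_ (measure_mono hsub)
        rw [measure_union hdisj measurableSet_Ioo, Real.volume_Ioo]
        refine le_trans ?_ (add_le_add_left ih _)
        rw [← ENNReal.ofReal_add (div_nonneg (by linarith [hb1 N]) hp.le) (by linarith)]
        apply ENNReal.ofReal_le_ofReal
        rw [hyz2]
        apply le_of_eq
        ring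
  have hb0 : ∀ N, 0 ≤ b N := by
    intro N
    have h := ((hinv N).trans (measure_mono Set.inter_subset_left)).trans hvol
    rw [ENNReal.ofReal_le_ofReal_iff (by positivity), inv_pow, div_le_iff₀ hp,
      inv_mul_cancel₀ hp.ne'] at h
    linarith
  have hbdd : BddBelow (Set.range b) := ⟨0, by rintro _ ⟨N, rfl⟩; exact hb0 N⟩
  have hbl : Tendsto b atTop (𝓝 (⨅ N, b N)) := tendsto_atTop_ciInf hba hbdd
  refine ⟨⨅ N, b N, le_ciInf hb0, (ciInf_le hbdd 0).trans (hb1 0), fun N => ciInf_le hbdd N, hbl, ?_⟩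
  have hzl : Tendsto z atTop (𝓝 ((⨅ N, b N) / 2 ^ d + γ)) := (hbl.div_const _).add hcl
  have hzge : ∀ N, (⨅ N, b N) / 2 ^ d + γ ≤ z N := fun N => hza.le_of_tendsto hzl N
  rintro ⟨p, q, hpq, h1, h2⟩
  obtain ⟨s, hs⟩ := (hW _).1 hpq
  obtain ⟨M, hM⟩ := eventually_atTop.1 (hzl.eventually_lt_const h2)
  let y := Nat.pair (encode (p, q)) s
  let N := Nat.pair y M
  have hN : z N < q := hM N (Nat.right_le_pair _ _)
  have hu : N.unpair.1 = y := by simp [N]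
  have hu1 : N.unpair.1.unpair.1 = Nat.pair (encode p) (encode q) := by
    rw [hu]; simp [y]
  have hu2 : N.unpair.1.unpair.2 = s := by rw [hu]; simp [y]
  have hbs : b (N + 1) = 2 ^ d * ((p : ℝ) - c N) := by
    rw [hb, betaR, hu1, hu2]
    simp only [Nat.unpair_pair, qv_dq]
    rw [if_pos]
    refine ⟨hs, (isq_iff _).2 ⟨p, rfl⟩, (isq_iff _).2 ⟨q, rfl⟩, lt_of_lt_of_le h1 (hzge N), hN⟩
  have h3 : z (N + 1) ≤ p := by
    have h4 : b (N + 1) / 2 ^ d = p - c N := by rw [hbs]; field_simp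
    have := hca (Nat.le_succ N)
    change b (N + 1) / 2 ^ d + c (N + 1) ≤ p
    linarith
  have := hzge (N + 1)
  linarith

/-- The machine used for the diagonalization. -/
def diagG (B : ℕ → ℕ → ℕ → Q3) (τ : List Bool) (n : ℕ) : Option ℕ :=
  bif nlt (lead τ) τ.length && lowOK (B (lead τ)) (τ.drop (lead τ + 1)) n then some 0 else none

theorem lowOK_computable {α : Type*} [Primcodable α] {B : α → ℕ → ℕ → Q3}
    (hB : Computable (fun x : α × ℕ × ℕ => B x.1 x.2.1 x.2.2)) :
    Computable (fun x : α × List Bool × ℕ => lowOK (B x.1) x.2.1 x.2.2) := by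
  have : Computable (fun x : α × List Bool × ℕ × ℕ => lowT (B x.1) x.2.1 x.2.2.1 x.2.2.2) := by
    unfold lowT
    fun_prop
  obtain ⟨F, hF⟩ : ∃ F : α → List Bool → ℕ → ℕ → Bool, F = fun a => lowT (B a) := ⟨_, rfl⟩
  have hFc : Computable (fun x : α × List Bool × ℕ × ℕ => F x.1 x.2.1 x.2.2.1 x.2.2.2) := by
    rw [hF]; exact this
  have hG : Computable (fun x : α × List Bool × ℕ => ball (x.2.2 + 1) (fun y =>
      nle y x.2.1.length && bex (x.2.1.length + 1) (fun t => F x.1 x.2.1 y t))) := by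
    fun_prop
  rw [hF] at hG
  exact hG

theorem diagG_computable {B : ℕ → ℕ → ℕ → Q3}
    (hB : Computable (fun x : ℕ × ℕ × ℕ => B x.1 x.2.1 x.2.2)) :
    Computable (fun x : List Bool × ℕ => diagG B x.1 x.2) := by
  have := lowOK_computable hB
  obtain ⟨F, hF⟩ : ∃ F : ℕ → List Bool → ℕ → Bool, F = fun a => lowOK (B a) := ⟨_, rfl⟩
  have hFc : Computable (fun x : ℕ × List Bool × ℕ => F x.1 x.2.1 x.2.2) := by
    rw [hF]; exact this
  have hG : Computable (fun x : List Bool × ℕ =>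
      bif nlt (lead x.1) x.1.length && F (lead x.1) (x.1.drop (lead x.1 + 1)) x.2
      then some 0 else none) := by
    fun_prop
  rw [hF] at hG
  exact hG

theorem diag_INF {B : ℕ → ℕ → ℕ → Q3} {c : CodeO}
    (hc : ∀ X n, evalO X c n = Nat.rfindOpt (fun k => diagG B (initSeg X k) n)) (e : ℕ) (Y : Cantor) :
    prepend (ones e ++ [false]) Y ∈ INF c ↔ Y ∈ lowC (B e) := by
  rw [lowC_iff_infinite]
  have : domSet c (prepend (ones e ++ [false]) Y) =
      {n | ∃ T, lowOK (B e) (initSeg Y T) n = true} := by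
    ext n
    change (evalO _ c n).Dom ↔ ∃ T, _
    rw [hc, Nat.rfindOpt_dom]
    have key : ∀ k, (∃ a, a ∈ diagG B (initSeg (prepend (ones e ++ [false]) Y) k) n) ↔
        e < k ∧ lowOK (B e) (initSeg Y (k - (e + 1))) n = true := by
      intro k
      unfold diagG
      rw [lead_prepend, initSeg_length]
      by_cases hk : e < k
      · rw [min_eq_right hk.le, drop_prepend]
        have h1 : nlt e k = true := by simpa using hk
        rw [h1, Bool.true_and]
        cases lowOK (B e) (initSeg Y (k - (e + 1))) n <;> simp [hk]
      · rw [min_eq_left (by omega)]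
        have h1 : nlt k k = false := by simp [Bool.eq_false_iff]
        rw [h1, Bool.false_and]
        simp [hk]
    simp only [key]
    constructor
    · rintro ⟨k, _, h⟩
      exact ⟨_, h⟩
    · rintro ⟨T, h⟩
      exact ⟨T + (e + 1), by omega, by rwa [Nat.add_sub_cancel]⟩
  change (domSet c _).Infinite ↔ _
  rw [this]

theorem random_INF {u : CodeO} (hu : UniversalOM u) : NRandom 2 (muR (INF u)) := by
  intro W hW hvol
  change CeIn (iterJump 1) W at hW
  obtain ⟨R, hR, hWR⟩ := CeIn_iff_Sig2.1 hW
  obtain ⟨σ, _, _, hσ⟩ := hu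
  let π : ℕ → List Bool := fun e => ((decode e : Option (List Bool)).getD []) ++ (ones e ++ [false])
  have hπ : Computable π := by
    simp only [π]
    fun_prop
  let g := clsG (infQ u.encode π)
  have hg : Computable (fun x : ℕ × ℕ × ℕ => g x.1 x.2.1 x.2.2) :=
    clsG_computable (infQ_computable u.encode hπ)
  let B : ℕ → ℕ → ℕ → Q3 := fun e => betaA R (π e).length (g e)
  have hB : Computable (fun x : ℕ × ℕ × ℕ => B x.1 x.2.1 x.2.2) :=
    betaA_computable hR (d := fun e => (π e).length) (by fun_prop) hg
  obtain ⟨c, hc⟩ := machine_exists (diagG B) (diagG_computable hB)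
  let e := encode (σ c)
  have hπe : π e = σ c ++ (ones e ++ [false]) := by simp [π, e]
  obtain ⟨a, ha1, ha2, ha3, ha4⟩ := cls_approx (infQ_mono u.encode π) (infQ_anti u.encode π) e
  obtain ⟨β, hβ0, hβ1, hβ2, hβ3, hβ4⟩ := betaR_spec hWR (hvol (π e).length) ha2 ha4
  refine ⟨(π e).length, ?_⟩
  have hlow : muR (lowC (B e)) = β := by
    refine muR_of_cut (measurableSet_lowC _) hβ0 hβ1 ?_ ?_
    · intro y h0 h1
      exact (lowC_iff (betaA_eventually R _ ha1) hβ2 hβ3 h0 (h1.trans_le hβ1)).2 h1.le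
    · intro y h0 h1 h2
      exact (lowC_iff (betaA_eventually R _ ha1) hβ2 hβ3 h0 h1).1 h2
  have hmem : ∀ X, Extends X (π e) → (X ∈ INF u ↔ shift (π e).length X ∈ lowC (B e)) := by
    intro X hX
    rw [← diag_INF hc e]
    have h1 : X = prepend (σ c) (prepend (ones e ++ [false]) (shift (π e).length X)) := by
      rw [← prepend_append, ← hπe, prepend_shift hX]
    have h2 : domSet u X = domSet c (prepend (ones e ++ [false]) (shift (π e).length X)) := by
      ext n
      change (evalO X u n).Dom ↔ (evalO _ c n).Dom
      rw [← hσ c, ← h1]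
    change (domSet u X).Infinite ↔ (domSet c _).Infinite
    rw [h2]
  have hsplit : muR (INF u) = β / 2 ^ (π e).length + muR (cls (infQ u.encode π) e) := by
    rw [← INF_diff_eq_cls]
    have hE : MeasurableSet {X : Cantor | Extends X (π e)} :=
      measurableSet_initSeg (π e).length (fun τ => τ = π e)
    have h1 : INF u ∩ {X | Extends X (π e)} =
        {X | Extends X (π e) ∧ shift (π e).length X ∈ lowC (B e)} := by
      ext X
      constructor
      · rintro ⟨h1, h2⟩
        exact ⟨h2, (hmem X h2).1 h1⟩
      · rintro ⟨h1, h2⟩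
        exact ⟨(hmem X h1).2 h2, h1⟩
    have h2 : muR (INF u ∩ {X | Extends X (π e)}) = β / 2 ^ (π e).length := by
      rw [h1, muR, mu_prepended _ (measurableSet_lowC _), ENNReal.toReal_mul,
        ENNReal.toReal_ofReal (by positivity)]
      change _ * muR _ = _
      rw [hlow, inv_pow]
      ring
    rw [← h2]
    exact (measureReal_inter_add_sdiff (μ := mu) (s := INF u) hE).symm
  rw [hsplit]
  exact hβ4

end RandProb


open scoped Classical
open MeasureTheory

namespace RandProb

open Encodable Filter Topology

/-! ### A universal machine -/

/-- The standard universal machine. -/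
noncomputable def univG (τ : List Bool) (n : ℕ) : Option ℕ :=
  bif nlt (lead τ) τ.length then
    hstep (bits ((τ.drop (lead τ + 1)).take (τ.length - (lead τ + 1)).unpair.1))
      (τ.length - (lead τ + 1)).unpair.2 (lead τ) n
  else none

theorem univG_computable : Computable (fun x : List Bool × ℕ => univG x.1 x.2) := by
  have : Computable (fun x : List Bool × ℕ =>
      hstep (bits ((x.1.drop (lead x.1 + 1)).take (x.1.length - (lead x.1 + 1)).unpair.1))
      (x.1.length - (lead x.1 + 1)).unpair.2 (lead x.1) x.2) :=
    hstep_computable (by fun_prop) (by fun_prop) (by fun_prop) (by fun_prop)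
  unfold univG
  exact Computable.cond (by fun_prop) this (by fun_prop)

theorem univG_prepend (e : ℕ) (Y : Cantor) (n k : ℕ) :
    univG (initSeg (prepend (ones e ++ [false]) Y) k) n = if e < k then
      hstep ((List.range (k - (e + 1)).unpair.1).map (oX Y)) (k - (e + 1)).unpair.2 e n else none := by
  unfold univG
  rw [lead_prepend, initSeg_length]
  by_cases hk : e < k
  · rw [min_eq_right hk.le, drop_prepend, initSeg_take Y (Nat.unpair_left_le _), bits_initSeg]
    have h1 : nlt e k = true := by simpa using hk
    rw [h1, cond_true, if_pos hk]
  · rw [min_eq_left (by omega)]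
    have h1 : nlt k k = false := by simp [Bool.eq_false_iff]
    rw [h1, cond_false, if_neg hk]

theorem univG_sound (c : CodeO) (Y : Cantor) (n k m : ℕ)
    (h : m ∈ univG (initSeg (prepend (ones c.encode ++ [false]) Y) k) n) : m ∈ evalO Y c n := by
  rw [univG_prepend] at h
  split_ifs at h
  · exact hstep_sound h
  · exact absurd h (by simp)

theorem univG_complete (c : CodeO) (Y : Cantor) (n m : ℕ) (h : m ∈ evalO Y c n) :
    ∃ k, m ∈ univG (initSeg (prepend (ones c.encode ++ [false]) Y) k) n := by
  obtain ⟨i, j, hij⟩ := hstep_complete h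
  refine ⟨Nat.pair i j + (c.encode + 1), ?_⟩
  rw [univG_prepend, if_pos (by omega), Nat.add_sub_cancel, Nat.unpair_pair]
  exact hij

theorem ones_prefix {e e' : ℕ} (h : ones e ++ [false] <+: ones e' ++ [false]) : e = e' := by
  have hl := h.length_le
  simp only [List.length_append, ones_length, List.length_singleton] at hl
  by_contra hne
  have hlt : e < e' := by omega
  obtain ⟨ρ, hρ⟩ := h
  have h1 : (ones e ++ [false] ++ ρ)[e]? = some false := by
    rw [List.append_assoc, List.getElem?_append_right (by simp)]
    simp
  rw [hρ, List.getElem?_append_left (by simpa using hlt)] at h1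
  simp [ones, hlt] at h1

/-! ### The machine with prescribed infinitude probability -/

/-- Combination of the universal machine above `1^d` with a cut machine elsewhere. -/
noncomputable def mixG (d : ℕ) (C : ℕ → ℕ → Q3) (τ : List Bool) (n : ℕ) : Option ℕ :=
  bif neq (encode (τ.take d)) (encode (ones d)) then univG (τ.drop d) n
  else bif nle d τ.length && lowOK C τ n then some 0 else none

theorem mixG_computable (d : ℕ) {C : ℕ → ℕ → Q3} (hC : Computable (fun x : ℕ × ℕ => C x.1 x.2)) :
    Computable (fun x : List Bool × ℕ => mixG d C x.1 x.2) := by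
  have h1 := univG_computable
  have h2 : Computable (fun x : Unit × List Bool × ℕ => lowOK C x.2.1 x.2.2) :=
    lowOK_computable (B := fun _ : Unit => C) (by fun_prop)
  have h3 : Computable (fun x : List Bool × ℕ => lowOK C x.1 x.2) :=
    h2.comp (g := fun x : List Bool × ℕ => ((), x.1, x.2)) (by fun_prop)
  unfold mixG
  fun_prop

theorem take_eq_ones_iff (d : ℕ) (X : Cantor) (k : ℕ) :
    (initSeg X k).take d = ones d ↔ d ≤ k ∧ Extends X (ones d) := by
  constructor
  · intro h
    have hl := congrArg List.length h
    simp only [List.length_take, initSeg_length, ones_length] at hl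
    have hk : d ≤ k := by omega
    rw [initSeg_take X hk] at h
    refine ⟨hk, ?_⟩
    rw [Extends, ones_length, h]
  · rintro ⟨hk, h⟩
    rw [Extends, ones_length] at h
    rw [initSeg_take X hk, h]

theorem mixG_ext (d : ℕ) (C : ℕ → ℕ → Q3) {X : Cantor} (hX : Extends X (ones d)) (k n : ℕ) :
    mixG d C (initSeg X k) n =
      if d ≤ k then univG (initSeg (shift d X) (k - d)) n else none := by
  unfold mixG
  by_cases hk : d ≤ k
  · have : neq (encode ((initSeg X k).take d)) (encode (ones d)) = true := by
      rw [neq_iff, encode_inj, take_eq_ones_iff]; exact ⟨hk, hX⟩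
    rw [this, cond_true, if_pos hk, initSeg_drop]
  · have h1 : neq (encode ((initSeg X k).take d)) (encode (ones d)) = false := by
      rw [Bool.eq_false_iff, ne_eq, neq_iff, encode_inj, take_eq_ones_iff]; tauto
    have h2 : nle d k = false := by simpa [Bool.eq_false_iff] using hk
    rw [h1, cond_false, if_neg hk, initSeg_length, h2]
    rfl

theorem mixG_not_ext (d : ℕ) (C : ℕ → ℕ → Q3) {X : Cantor} (hX : ¬ Extends X (ones d)) (k n : ℕ) :
    (∃ a, a ∈ mixG d C (initSeg X k) n) ↔ d ≤ k ∧ lowOK C (initSeg X k) n = true := by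
  unfold mixG
  have h1 : neq (encode ((initSeg X k).take d)) (encode (ones d)) = false := by
    rw [Bool.eq_false_iff, ne_eq, neq_iff, encode_inj, take_eq_ones_iff]; tauto
  rw [h1, cond_false, initSeg_length, ← nle_iff d k, ← Bool.and_eq_true]
  cases nle d k && lowOK C (initSeg X k) n <;> simp

theorem lowOK_mono (C : ℕ → ℕ → Q3) (X : Cantor) {T T' : ℕ} (hT : T ≤ T') {n : ℕ}
    (h : lowOK C (initSeg X T) n = true) : lowOK C (initSeg X T') n = true := by
  unfold lowOK at *
  simp only [ball_iff, Bool.and_eq_true, nle_iff, bex_iff, initSeg_length] at *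
  intro x hx
  obtain ⟨h1, t, ht, h2⟩ := h x hx
  refine ⟨by omega, t, by omega, ?_⟩
  rw [lowT_initSeg C X h1] at h2
  rw [lowT_initSeg C X (by omega)]
  exact h2

theorem ones_succ (d : ℕ) : ones (d + 1) = ones d ++ [true] := by
  simp [ones, List.range_succ]

theorem sval_ones (d : ℕ) : sval (ones d) + 1 = 2 ^ d := by
  induction d with
  | zero => rfl
  | succ d ih =>
    rw [ones_succ, sval_append, pow_succ, ← ih, cond_true]
    ring

theorem mix_universal {d : ℕ} {C : ℕ → ℕ → Q3} {u : CodeO}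
    (hu : ∀ X n, evalO X u n = Nat.rfindOpt (fun k => mixG d C (initSeg X k) n)) :
    UniversalOM u := by
  refine ⟨fun c => ones d ++ (ones c.encode ++ [false]),
    ⟨fun n => encode (ones d ++ (ones n ++ [false])), by fun_prop, fun c => rfl⟩, ?_, ?_⟩
  · rintro _ ⟨c, rfl⟩ _ ⟨c', rfl⟩ h
    have h1 := ones_prefix ((List.prefix_append_right_inj _).1 h)
    change ones d ++ (ones c.encode ++ [false]) = ones d ++ (ones c'.encode ++ [false])
    rw [h1]
  · intro c Y n
    rw [hu, prepend_append]
    have hX := extends_prepend (ones d) (prepend (ones c.encode ++ [false]) Y)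
    have hs := shift_prepend (ones d) (prepend (ones c.encode ++ [false]) Y)
    rw [ones_length] at hs
    apply rfindOpt_eq
    · intro k m hm
      rw [mixG_ext d C hX, hs] at hm
      split_ifs at hm
      · exact univG_sound c Y n _ m hm
      · exact absurd hm (by simp)
    · intro m hm
      obtain ⟨k, hk⟩ := univG_complete c Y n m hm
      refine ⟨k + d, ?_⟩
      rw [mixG_ext d C hX, hs, if_pos (by omega), Nat.add_sub_cancel]
      exact hk

theorem mix_INF {d : ℕ} {C : ℕ → ℕ → Q3} {c : ℕ → ℝ} {γ : ℝ} {u u0 : CodeO}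
    (hu : ∀ X n, evalO X u n = Nat.rfindOpt (fun k => mixG d C (initSeg X k) n))
    (hu0 : ∀ X n, evalO X u0 n = Nat.rfindOpt (fun k => univG (initSeg X k) n))
    (hC : ∀ N, ∀ᶠ T in atTop, qv (C N T) = c N) (hγ : ∀ N, γ ≤ c N)
    (hlim : Tendsto c atTop (𝓝 γ)) (h0 : 0 ≤ γ) (h1 : γ ≤ 1 - 2⁻¹ ^ d) :
    muR (INF u) = 2⁻¹ ^ d * muR (INF u0) + γ := by
  have hE : MeasurableSet {X : Cantor | Extends X (ones d)} :=
    measurableSet_initSeg (ones d).length (fun τ => τ = ones d)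
  have hp : (0 : ℝ) < 2⁻¹ ^ d := by positivity
  have hdom1 : ∀ X, Extends X (ones d) → domSet u X = domSet u0 (shift d X) := by
    intro X hX
    ext n
    change (evalO X u n).Dom ↔ (evalO _ u0 n).Dom
    rw [hu, hu0, Nat.rfindOpt_dom, Nat.rfindOpt_dom]
    constructor
    · rintro ⟨k, m, hm⟩
      rw [mixG_ext d C hX] at hm
      split_ifs at hm
      · exact ⟨_, m, hm⟩
      · exact absurd hm (by simp)
    · rintro ⟨k, m, hm⟩
      refine ⟨k + d, m, ?_⟩
      rw [mixG_ext d C hX, if_pos (by omega), Nat.add_sub_cancel]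
      exact hm
  have hmem1 : INF u ∩ {X | Extends X (ones d)} =
      {X | Extends X (ones d) ∧ shift (ones d).length X ∈ INF u0} := by
    ext X
    rw [ones_length]
    constructor
    · rintro ⟨h2, h3⟩
      refine ⟨h3, ?_⟩
      change (domSet u0 _).Infinite
      rw [← hdom1 X h3]
      exact h2
    · rintro ⟨h2, h3⟩
      refine ⟨?_, h2⟩
      change (domSet u _).Infinite
      rw [hdom1 X h2]
      exact h3
  have hmem2 : INF u \ {X | Extends X (ones d)} = lowC C \ {X | Extends X (ones d)} := by
    ext X
    refine and_congr_left fun hX => ?_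
    have hX' : ¬ Extends X (ones d) := hX
    rw [lowC_iff_infinite]
    change (domSet u X).Infinite ↔ _
    have : domSet u X = {n | ∃ T, lowOK C (initSeg X T) n = true} := by
      ext n
      change (evalO X u n).Dom ↔ ∃ T, _
      rw [hu, Nat.rfindOpt_dom]
      simp only [mixG_not_ext d C hX']
      constructor
      · rintro ⟨k, _, h⟩
        exact ⟨k, h⟩
      · rintro ⟨T, h⟩
        exact ⟨T + d, by omega, lowOK_mono C X (by omega) h⟩
    rw [this]
  have h2 : muR (INF u ∩ {X | Extends X (ones d)}) = 2⁻¹ ^ d * muR (INF u0) := by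
    rw [hmem1, muR, mu_prepended _ (measurableSet_INF _), ENNReal.toReal_mul,
      ENNReal.toReal_ofReal (by positivity), ones_length]
    rfl
  have h3 : muR (INF u \ {X | Extends X (ones d)}) = γ := by
    rw [hmem2]
    refine muR_of_cut ((measurableSet_lowC _).diff hE) h0 (by linarith) ?_ ?_
    · intro y hy0 hy1
      have hy2 : y < 1 := by linarith
      refine ⟨(lowC_iff hC hγ hlim hy0 hy2).2 hy1.le, ?_⟩
      intro hext
      have hext' : Extends (digits y) (ones d) := hext
      rw [extends_digits_iff hy0 hy2, ones_length] at hext'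
      have h4 : (⌊y * 2 ^ d⌋₊ : ℝ) ≤ y * 2 ^ d := Nat.floor_le (by positivity)
      rw [hext'] at h4
      have h5 : (sval (ones d) : ℝ) + 1 = 2 ^ d := by exact_mod_cast sval_ones d
      have h6 : (2 : ℝ)⁻¹ ^ d * 2 ^ d = 1 := by rw [← mul_pow]; norm_num
      have h7 : (0 : ℝ) < 2 ^ d := by positivity
      nlinarith
    · intro y hy0 hy1 hy
      exact (lowC_iff hC hγ hlim hy0 hy1).1 hy.1
  rw [← h2]
  conv_rhs => rw [← h3]
  exact (measureReal_inter_add_sdiff (μ := mu) (s := INF u) hE).symm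

/-! ### The Kučera–Slaman argument -/

/-- Running minimum. -/
noncomputable def runMin (f : ℕ → ℝ) : ℕ → ℝ
  | 0 => f 0
  | t + 1 => min (runMin f t) (f (t + 1))

theorem runMin_le (f : ℕ → ℝ) {s t : ℕ} (h : s ≤ t) : runMin f t ≤ f s := by
  induction t with
  | zero =>
    have : s = 0 := by omega
    rw [this]; exact le_rfl
  | succ t ih =>
    rcases Nat.lt_or_ge t s with h1 | h1
    · have : s = t + 1 := by omega
      rw [this]; exact min_le_right _ _
    · exact (min_le_left _ _).trans (ih h1)

theorem ks_volume {a b : ℕ → ℝ} {ε β : ℝ} (hε : 0 ≤ ε) (ha : Antitone a) (hb : Antitone b)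
    (hβ : ∀ N, β ≤ b N) :
    volume {x : ℝ | ∃ s t, s ≤ t ∧ a s - ε * (b s - b t) < x ∧ x < a t} ≤
      ENNReal.ofReal (ε * (b 0 - β)) := by
  let f : ℕ → ℝ := fun s => a s - ε * b s
  let e : ℕ → ℝ := fun t => runMin f t + ε * b t
  have hsub : {x : ℝ | ∃ s t, s ≤ t ∧ a s - ε * (b s - b t) < x ∧ x < a t} ⊆
      ⋃ r, Set.Ioc (e r - ε * (b r - b (r + 1))) (e r) := by
    rintro x ⟨s, t, hst, h1, h2⟩
    have het : e t < x := by
      have := runMin_le f hst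
      simp only [e, f] at *
      linarith
    have hex : ∃ t, e t < x := ⟨t, het⟩
    have hr := Nat.find_spec hex
    have hrt : Nat.find hex ≤ t := Nat.find_min' hex het
    have hmin : ∀ r < Nat.find hex, x ≤ e r := fun r hr => not_lt.1 (Nat.find_min hex hr)
    generalize Nat.find hex = r at *
    rcases r with _ | r
    · exfalso
      have h3 : e 0 = a 0 := by
        change a 0 - ε * b 0 + ε * b 0 = a 0
        ring
      have := ha (Nat.zero_le t)
      linarith
    · refine Set.mem_iUnion.2 ⟨r, ?_, hmin r (Nat.lt_succ_self r)⟩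
      have h3 := ha hrt
      have h4 : runMin f (r + 1) = runMin f r := by
        change min (runMin f r) (f (r + 1)) = runMin f r
        rcases min_choice (runMin f r) (f (r + 1)) with h | h
        · exact h
        · exfalso
          have h5 : e (r + 1) = a (r + 1) := by
            change min (runMin f r) (f (r + 1)) + ε * b (r + 1) = a (r + 1)
            rw [h]
            simp only [f]
            ring
          linarith
      have h6 : e (r + 1) = runMin f r + ε * b (r + 1) := by
        simp only [e, h4]
      simp only [e] at hr h6 ⊢
      linarith
  refine (measure_mono hsub).trans ((measure_iUnion_le _).trans ?_)
  refine ENNReal.tsum_le_of_sum_range_le fun n => ?_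
  have hsum : ∑ r ∈ Finset.range n, volume (Set.Ioc (e r - ε * (b r - b (r + 1))) (e r)) =
      ENNReal.ofReal (ε * (b 0 - b n)) := by
    induction n with
    | zero => simp
    | succ n ih =>
      have h0 := hb (Nat.zero_le n)
      have h1 := hb (Nat.le_succ n)
      rw [Finset.sum_range_succ, ih, Real.volume_Ioc,
        ← ENNReal.ofReal_add (mul_nonneg hε (by linarith)) ?_]
      · congr 1
        ring
      · have := mul_nonneg hε (sub_nonneg.2 h1)
        simp only [Nat.succ_eq_add_one] at this
        linarith
  rw [hsum]
  exact ENNReal.ofReal_le_ofReal (mul_le_mul_of_nonneg_left (by linarith [hβ n]) hε)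

/-- Lower end of the test intervals. -/
def ksLo (A B : ℕ → ℕ → Q3) (d s t T : ℕ) : Q3 :=
  qsub (A s T) (qmul (qdy 1 d) (qsub (B s T) (B t T)))

/-- The decidable matrix of the Kučera–Slaman test. -/
def ksR (A B : ℕ → ℕ → Q3) (k m w T : ℕ) : Bool :=
  nlt T w.unpair.2 || (isq m.unpair.2.unpair.1 && isq m.unpair.2.unpair.2 &&
    nle w.unpair.1.unpair.1 w.unpair.1.unpair.2 &&
    !(qlt (dq m.unpair.2.unpair.1) (ksLo A B (m.unpair.1 + k) w.unpair.1.unpair.1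
        w.unpair.1.unpair.2 T)) &&
    !(qlt (A w.unpair.1.unpair.2 T) (dq m.unpair.2.unpair.2)))

theorem ksR_computable {A B : ℕ → ℕ → Q3} (hA : Computable (fun x : ℕ × ℕ => A x.1 x.2))
    (hB : Computable (fun x : ℕ × ℕ => B x.1 x.2)) (k : ℕ) :
    Computable (fun x : ℕ × ℕ × ℕ => ksR A B k x.1 x.2.1 x.2.2) := by
  have : Computable (fun x : ℕ × ℕ × ℕ × ℕ => ksLo A B x.1 x.2.1 x.2.2.1 x.2.2.2) := by
    unfold ksLo
    fun_prop
  unfold ksR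
  fun_prop

theorem ks_main {α β : ℝ} {A B : ℕ → ℕ → Q3} {a b : ℕ → ℝ} (hα : NRandom 2 α)
    (hA : Rep A a) (haa : Antitone a) (hαa : ∀ N, α < a N)
    (hB : Rep B b) (hba : Antitone b) (hβ : ∀ N, β ≤ b N) (k0 : ℕ) :
    ∃ d, k0 ≤ d ∧ ∀ s t, s ≤ t → α ≤ a s - 2⁻¹ ^ d * (b s - b t) := by
  obtain ⟨k1, hk1⟩ := pow_unbounded_of_one_lt (b 0 - β) (by norm_num : (1 : ℝ) < 2)
  let k := k0 + k1
  have hk : b 0 - β ≤ 2 ^ k := hk1.le.trans (pow_le_pow_right₀ (by norm_num) (by omega))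
  let W : Set ℕ := {m | ∃ w, ∀ T, ksR A B k m w T = true}
  have hW : CeIn (iterJump (2 - 1)) W :=
    CeIn_iff_Sig2.2 ⟨ksR A B k, ksR_computable hA.1 hB.1 k, fun m => Iff.rfl⟩
  have hlo : ∀ d s t, ∀ᶠ T in atTop, qv (ksLo A B d s t T) = a s - 2⁻¹ ^ d * (b s - b t) := by
    intro d s t
    filter_upwards [hA.2 s, hB.2 s, hB.2 t] with T h1 h2 h3
    rw [ksLo, qv_sub, qv_mul, qv_sub, qv_dy, h1, h2, h3]
    push_cast
    rw [inv_pow, one_div]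
  have hWm : ∀ i (p q : ℚ), Nat.pair i (encode (p, q)) ∈ W ↔
      ∃ s t, s ≤ t ∧ a s - 2⁻¹ ^ (i + k) * (b s - b t) ≤ p ∧ (q : ℝ) ≤ a t := by
    intro i p q
    have hR : ∀ w T, ksR A B k (Nat.pair i (encode (p, q))) w T = true ↔
        (T < w.unpair.2 ∨ (w.unpair.1.unpair.1 ≤ w.unpair.1.unpair.2 ∧
          qv (ksLo A B (i + k) w.unpair.1.unpair.1 w.unpair.1.unpair.2 T) ≤ p ∧
          (q : ℝ) ≤ qv (A w.unpair.1.unpair.2 T))) := by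
      intro w T
      unfold ksR
      have hip : isq (encode p) = true := (isq_iff _).2 ⟨p, rfl⟩
      have hiq : isq (encode q) = true := (isq_iff _).2 ⟨q, rfl⟩
      simp only [encode_ratpair, Nat.unpair_pair, hip, hiq, Bool.or_eq_true, nlt_iff,
        Bool.and_eq_true, nle_iff, Bool.not_eq_true', Bool.eq_false_iff, ne_eq, qlt_iff, not_lt,
        qv_dq, true_and, and_assoc]
    constructor
    · rintro ⟨w, hw⟩
      obtain ⟨T, h1, h2, h3⟩ := ((hlo (i + k) w.unpair.1.unpair.1 w.unpair.1.unpair.2).and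
        ((hA.2 w.unpair.1.unpair.2).and (eventually_ge_atTop w.unpair.2))).exists
      rcases (hR w T).1 (hw T) with h | h
      · omega
      · rw [h1, h2] at h
        exact ⟨_, _, h⟩
    · rintro ⟨s, t, hst, h1, h2⟩
      obtain ⟨T0, hT0⟩ := eventually_atTop.1 ((hlo (i + k) s t).and (hA.2 t))
      refine ⟨Nat.pair (Nat.pair s t) T0, fun T => (hR _ T).2 ?_⟩
      simp only [Nat.unpair_pair]
      rcases Nat.lt_or_ge T T0 with h | h
      · exact Or.inl h
      · right
        obtain ⟨h3, h4⟩ := hT0 T h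
        rw [h3, h4]
        exact ⟨hst, h1, h2⟩
  have hts : ∀ i, testSet W i =
      {x : ℝ | ∃ s t, s ≤ t ∧ a s - 2⁻¹ ^ (i + k) * (b s - b t) < x ∧ x < a t} := by
    intro i
    ext x
    constructor
    · rintro ⟨p, q, hpq, h1, h2⟩
      obtain ⟨s, t, hst, h3, h4⟩ := (hWm i p q).1 hpq
      exact ⟨s, t, hst, by linarith, by linarith⟩
    · rintro ⟨s, t, hst, h1, h2⟩
      obtain ⟨p, hp1, hp2⟩ := exists_rat_btwn h1
      obtain ⟨q, hq1, hq2⟩ := exists_rat_btwn h2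
      exact ⟨p, q, (hWm i p q).2 ⟨s, t, hst, hp1.le, hq2.le⟩, hp2, hq1⟩
  obtain ⟨i, hi⟩ := hα W hW (by
    intro i
    rw [hts]
    refine (ks_volume (by positivity) haa hba hβ).trans (ENNReal.ofReal_le_ofReal ?_)
    have h1 : (2 : ℝ)⁻¹ ^ k * 2 ^ k = 1 := by rw [← mul_pow]; norm_num
    calc (2 : ℝ)⁻¹ ^ (i + k) * (b 0 - β) ≤ 2⁻¹ ^ (i + k) * 2 ^ k :=
          mul_le_mul_of_nonneg_left hk (by positivity)
      _ = 2⁻¹ ^ i := by rw [pow_add, mul_assoc, h1, mul_one])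
  refine ⟨i + k, by omega, fun s t hst => ?_⟩
  by_contra hc
  push Not at hc
  rw [hts] at hi
  exact hi ⟨s, t, hst, hc, hαa t⟩

theorem exists_universal {α : ℝ} (h0 : 0 < α) (h1 : α < 1) (hα : NRandom 2 α)
    (hr : RightCeIn (iterJump 1) α) : ∃ u : CodeO, UniversalOM u ∧ muR (INF u) = α := by
  obtain ⟨u0, hu0⟩ := machine_exists univG univG_computable
  obtain ⟨B, b, hB, hba, hβ, hbl⟩ := rep_INF u0
  obtain ⟨A, a, hA, haa, hαa, _, hal⟩ := rep_of_right hr h1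
  obtain ⟨k0, hk0⟩ := exists_pow_lt_of_lt_one (lt_min h0 (sub_pos.2 h1))
    (by norm_num : (2 : ℝ)⁻¹ < 1)
  obtain ⟨d, hd, hks⟩ := ks_main hα hA haa hαa hB hba hβ k0
  have hdk : (2 : ℝ)⁻¹ ^ d ≤ 2⁻¹ ^ k0 := pow_le_pow_of_le_one (by norm_num) (by norm_num) hd
  have hp : (0 : ℝ) < 2⁻¹ ^ d := by positivity
  have hd1 : (2 : ℝ)⁻¹ ^ d ≤ α := hdk.trans (hk0.le.trans (min_le_left _ _))
  have hd2 : (2 : ℝ)⁻¹ ^ d ≤ 1 - α := hdk.trans (hk0.le.trans (min_le_right _ _))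
  have hb0 : 0 ≤ muR (INF u0) := ENNReal.toReal_nonneg
  have hb1 : muR (INF u0) ≤ 1 := measureReal_le_one
  let C : ℕ → ℕ → Q3 := fun N T => qsub (A N T) (qmul (qdy 1 d) (B N T))
  have hCc : Computable (fun x : ℕ × ℕ => C x.1 x.2) := by
    have h2 := hA.1
    have h3 := hB.1
    simp only [C]
    fun_prop
  have hC : ∀ N, ∀ᶠ T in atTop, qv (C N T) = a N - 2⁻¹ ^ d * b N := by
    intro N
    filter_upwards [hA.2 N, hB.2 N] with T h2 h3
    simp only [C]
    rw [qv_sub, qv_mul, qv_dy, h2, h3]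
    push_cast
    rw [inv_pow, one_div]
  obtain ⟨u, hu⟩ := machine_exists (mixG d C) (mixG_computable d hCc)
  refine ⟨u, mix_universal hu, ?_⟩
  rw [mix_INF (γ := α - 2⁻¹ ^ d * muR (INF u0)) hu hu0 hC ?_ (hal.sub (hbl.const_mul _)) ?_ ?_]
  · ring
  · intro N
    have h2 : α ≤ a N - 2⁻¹ ^ d * (b N - muR (INF u0)) := by
      refine ge_of_tendsto ((hbl.const_sub (b N)).const_mul ((2 : ℝ)⁻¹ ^ d) |>.const_sub (a N)) ?_
      filter_upwards [eventually_ge_atTop N] with t ht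
      exact hks N t ht
    linarith
  · nlinarith
  · nlinarith

end RandProb

namespace RandProb

/-- **Infinitude probability for universal oracle machines.**
The probability that the function computed by a universal oracle machine has infinite
domain is a 2-random `∅'`-right-c.e. real; conversely, every 2-random `∅'`-right-c.e.
real in `(0,1)` is the infinitude probability of some universal oracle machine. -/
theorem infinitude_probability_characterization :
    (∀ u : CodeO, UniversalOM u →
        NRandom 2 (muR (INF u)) ∧ RightCeIn (iterJump 1) (muR (INF u))) ∧
    (∀ α : ℝ, 0 < α → α < 1 → NRandom 2 α → RightCeIn (iterJump 1) α →
        ∃ u : CodeO, UniversalOM u ∧ muR (INF u) = α) := by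
  exact ⟨fun u hu => ⟨random_INF hu, right_INF u⟩,
    fun _ h0 h1 hα hr => exists_universal h0 h1 hα hr⟩

end RandProb
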